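/- arXiv:2208.01384 — 7 statements merged into one kernel-verified Lean document; each statement's English description precedes it below -/
import Mathlib

section
/- For every α ∈ (0,1), every nonuniform time mesh, and all indices k ≥ 2 and 1 ≤ j ≤ k−1, the L2-1_σ coefficients satisfy a_j^{k+1} − a_j^k > 0. -/
open MeasureTheory Real Finset

noncomputable section

/-- Time step `τ_j = t_j - t_{j-1}`. -/
def tau (t : ℕ → ℝ) (j : ℕ) : ℝ := t j - t (j - 1)

/-- Step ratio `ρ_j = τ_j / τ_{j-1}`. -/
def rho (t : ℕ → ℝ) (j : ℕ) : ℝ := tau t j / tau t (j - 1)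

/-- Offset node `t_k^* = t_{k-1} + σ τ_k` with `σ = 1 - α/2`. -/
def tstar (α : ℝ) (t : ℕ → ℝ) (k : ℕ) : ℝ := t (k - 1) + (1 - α / 2) * tau t k

/-- L2-1_σ coefficient `a_j^k`. -/
def acoef (α : ℝ) (t : ℕ → ℝ) (j k : ℕ) : ℝ :=
  ∫ θ in (0:ℝ)..1,
    (-2 * tau t j * (1 - θ) - tau t (j + 1)) /
      ((tau t j + tau t (j + 1)) * (tstar α t k - (t (j - 1) + θ * tau t j)) ^ α)

/-- L2-1_σ coefficient `c_j^k`. -/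
def ccoef (α : ℝ) (t : ℕ → ℝ) (j k : ℕ) : ℝ :=
  ∫ θ in (0:ℝ)..1,
    (tau t j ^ 2 * (2 * θ - 1)) /
      (tau t (j + 1) * (tau t j + tau t (j + 1)) *
        (tstar α t k - (t (j - 1) + θ * tau t j)) ^ α)

/-- `d_j^k = c_{j-1}^k - a_j^k`. -/
def dcoef (α : ℝ) (t : ℕ → ℝ) (j k : ℕ) : ℝ := ccoef α t (j - 1) k - acoef α t j k

/-- The lower-triangular L2-1_σ matrix `M` (entries vanish above the diagonal and
for column index `0`). -/
def Mentry (α : ℝ) (t : ℕ → ℝ) (k j : ℕ) : ℝ :=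
  if j = 0 ∨ k < j then 0
  else if j = k then ccoef α t (k - 1) k + (1 - α / 2) ^ (1 - α) / ((1 - α) * tau t k ^ α)
  else if j = 1 then -acoef α t 1 k
  else dcoef α t j k

end

/-!
Since `a_j^k` depends on `k` only through `t_k^*`, it is minus the integral over `[0, 1]` of a
nonnegative weight divided by `(s - x(θ))^α` at `s = t_k^*`, where `x(θ) ∈ [t_{j-1}, t_j]`. For
`s > t_j` that integral is strictly decreasing in `s`, and the offset nodes interlace the mesh,
`t_{k-1} < t_k^* ≤ t_k`, so that `t_k^*` increases with `k` and lies beyond `t_j` once `k > j`.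
-/

theorem strictAntiOn_integral_div_sub_rpow {a b m α : ℝ} {w g : ℝ → ℝ} (hab : a < b) (hα : 0 < α)
    (hw : ContinuousOn w (Set.Icc a b)) (hg : ContinuousOn g (Set.Icc a b))
    (hw_nonneg : ∀ x ∈ Set.Icc a b, 0 ≤ w x) (hw_pos : ∃ x ∈ Set.Icc a b, 0 < w x)
    (hgm : ∀ x ∈ Set.Icc a b, g x ≤ m) :
    StrictAntiOn (fun s => ∫ x in a..b, w x / (s - g x) ^ α) (Set.Ioi m) := by
  have base_pos {s x : ℝ} (hs : m < s) (hx : x ∈ Set.Icc a b) : 0 < s - g x :=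
    sub_pos.2 ((hgm x hx).trans_lt hs)
  have cont {s : ℝ} (hs : m < s) :
      ContinuousOn (fun x => w x / (s - g x) ^ α) (Set.Icc a b) :=
    hw.div ((continuousOn_const.sub hg).rpow_const fun x hx => .inl (base_pos hs hx).ne')
      fun x hx => (rpow_pos_of_pos (base_pos hs hx) α).ne'
  intro s hs s' hs' hss'
  have denom_pos {x : ℝ} (hx : x ∈ Set.Icc a b) : 0 < (s - g x) ^ α :=
    rpow_pos_of_pos (base_pos hs hx) α
  have denom_lt {x : ℝ} (hx : x ∈ Set.Icc a b) : (s - g x) ^ α < (s' - g x) ^ α :=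
    rpow_lt_rpow (base_pos hs hx).le (sub_lt_sub_right hss' _) hα
  obtain ⟨c, hc, hwc⟩ := hw_pos
  refine intervalIntegral.integral_lt_integral_of_continuousOn_of_le_of_exists_lt hab
    (cont hs') (cont hs) (fun x hx => ?_)
    ⟨c, hc, div_lt_div_of_pos_left hwc (denom_pos hc) (denom_lt hc)⟩
  have hx := Set.Ioc_subset_Icc_self hx
  exact div_le_div_of_nonneg_left (hw_nonneg x hx) (denom_pos hx) (denom_lt hx).le

section Mesh

variable {α : ℝ} {t : ℕ → ℝ} {j k : ℕ}

theorem tau_pos (ht : StrictMono t) (hk : 1 ≤ k) : 0 < tau t k :=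
  sub_pos.2 (ht (Nat.sub_lt hk one_pos))

theorem lt_tstar (hα : α < 2) (hτ : 0 < tau t k) : t (k - 1) < tstar α t k :=
  lt_add_of_pos_right _ (mul_pos (by linarith) hτ)

theorem tstar_le (hα : 0 ≤ α) (hτ : 0 ≤ tau t k) : tstar α t k ≤ t k :=
  calc tstar α t k = t k - α / 2 * tau t k := by unfold tstar tau; ring
    _ ≤ t k := sub_le_self _ (by positivity)

theorem strictMonoOn_tstar (hα : α ∈ Set.Ico (0 : ℝ) 2) (ht : StrictMono t) :
    StrictMonoOn (tstar α t) (Set.Ici 1) := fun k hk l hl hkl =>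
  calc tstar α t k ≤ t k := tstar_le hα.1 (tau_pos ht hk).le
    _ ≤ t (l - 1) := ht.monotone (Nat.le_sub_one_of_lt hkl)
    _ < tstar α t l := lt_tstar hα.2 (tau_pos ht hl)

theorem mapsTo_tstar_Ioi (hα : α < 2) (ht : StrictMono t) :
    Set.MapsTo (tstar α t) (Set.Ioi j) (Set.Ioi (t j)) := fun k (hk : j < k) =>
  calc t j ≤ t (k - 1) := ht.monotone (Nat.le_sub_one_of_lt hk)
    _ < tstar α t k := lt_tstar hα (tau_pos ht (Nat.one_le_of_lt hk))

theorem add_mul_tau_le {θ : ℝ} (hτ : 0 ≤ tau t j) (hθ : θ ≤ 1) :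
    t (j - 1) + θ * tau t j ≤ t j :=
  calc t (j - 1) + θ * tau t j ≤ t (j - 1) + tau t j :=
        add_le_add_right (mul_le_of_le_one_left hτ hθ) _
    _ = t j := add_sub_cancel _ _

/-- The weight `w_j` for which `a_j^k = -∫₀¹ w_j(θ) (t_k^* - (t_{j-1} + θ τ_j))^{-α} dθ`. -/
noncomputable def acoefWeight (t : ℕ → ℝ) (j : ℕ) (θ : ℝ) : ℝ :=
  (2 * tau t j * (1 - θ) + tau t (j + 1)) / (tau t j + tau t (j + 1))

theorem continuous_acoefWeight : Continuous (acoefWeight t j) := by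
  unfold acoefWeight
  fun_prop

theorem acoefWeight_pos {θ : ℝ} (hτ : 0 ≤ tau t j) (hτ' : 0 < tau t (j + 1)) (hθ : θ ≤ 1) :
    0 < acoefWeight t j θ := by
  have := sub_nonneg.2 hθ
  unfold acoefWeight
  positivity

theorem acoef_eq_neg_integral : acoef α t j k =
    -∫ θ in (0 : ℝ)..1,
      acoefWeight t j θ / (tstar α t k - (t (j - 1) + θ * tau t j)) ^ α := by
  rw [acoef, ← intervalIntegral.integral_neg]
  congr 1 with θ
  rw [acoefWeight, div_div, ← neg_div]
  ring

theorem acoef_diff_k_pos_general (hα : α ∈ Set.Ioo (0 : ℝ) 2) (ht : StrictMono t) (hj : 1 ≤ j) :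
    StrictMonoOn (acoef α t j) (Set.Ioi j) := by
  have hτ : 0 ≤ tau t j := (tau_pos ht hj).le
  have weight_pos {θ : ℝ} (hθ : θ ≤ 1) : 0 < acoefWeight t j θ :=
    acoefWeight_pos hτ (tau_pos ht (Nat.le_add_left 1 j)) hθ
  have integral_anti := strictAntiOn_integral_div_sub_rpow one_pos hα.1
    continuous_acoefWeight.continuousOn
    (g := fun θ => t (j - 1) + θ * tau t j) (by fun_prop)
    (fun θ hθ => (weight_pos hθ.2).le) ⟨0, by simp, weight_pos zero_le_one⟩
    (fun θ hθ => add_mul_tau_le hτ hθ.2)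
  have tstar_mono : StrictMonoOn (tstar α t) (Set.Ioi j) :=
    (strictMonoOn_tstar ⟨hα.1.le, hα.2⟩ ht).mono fun _ hk => Nat.one_le_of_lt hk
  intro k hk l hl hkl
  rw [acoef_eq_neg_integral, acoef_eq_neg_integral, neg_lt_neg_iff]
  exact integral_anti.comp_strictMonoOn tstar_mono (mapsTo_tstar_Ioi hα.2 ht) hk hl hkl

end Mesh

/-- (P2): `a_j^{k+1} - a_j^k > 0` for `k ≥ 2`, `1 ≤ j ≤ k-1`. -/
theorem acoef_diff_k_pos (α : ℝ) (hα : α ∈ Set.Ioo (0:ℝ) 1)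
    (t : ℕ → ℝ) (ht0 : t 0 = 0) (hmono : StrictMono t)
    (k j : ℕ) (hk : 2 ≤ k) (hj1 : 1 ≤ j) (hj2 : j ≤ k - 1) :
    acoef α t j (k + 1) - acoef α t j k > 0 := by
  have hjk : j < k := by omega
  exact sub_pos.2 <| acoef_diff_k_pos_general ⟨hα.1, hα.2.trans one_lt_two⟩ hmono hj1 hjk
    (hjk.trans k.lt_succ_self) k.lt_succ_self
end

section
/- For every α ∈ (0,1), every nonuniform time mesh, and all indices k ≥ 3 and 2 ≤ j ≤ k−1, the quantity d_j^k = c_{j−1}^k − a_j^k is strictly positive: d_j^k > 0. -/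
open MeasureTheory Real Finset

/-!
Both coefficients integrate a linear weight against the kernel `(t_k^* - x)^{-α}` over a cell
`[t_{j-1}, t_j]` lying to the left of its singularity `t_k^*`. The weight of `a_j^k` is negative,
so `a_j^k < 0`. The weight of `c_j^k` is odd about the midpoint of the cell and the kernel
increases, so the positive half of the weight meets the larger values and `c_j^k ≥ 0`.
-/

theorem integral_sub_midpoint_eq_zero (a b : ℝ) : ∫ x in a..b, (x - (a + b) / 2) = 0 := by
  rw [intervalIntegral.integral_comp_sub_right (fun x : ℝ ↦ x), integral_id]
  ring

theorem integral_sub_midpoint_mul_nonneg {f : ℝ → ℝ} {a b : ℝ} (hab : a ≤ b)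
    (hf : MonotoneOn f (Set.Icc a b)) : 0 ≤ ∫ x in a..b, (x - (a + b) / 2) * f x := by
  set m := (a + b) / 2 with hm
  have hm_mem : m ∈ Set.Icc a b := ⟨by linarith, by linarith⟩
  have hf_int : IntervalIntegrable f volume a b :=
    MonotoneOn.intervalIntegrable (by rwa [Set.uIcc_of_le hab])
  calc
    0 = ∫ x in a..b, (x - m) * f m := by
      rw [intervalIntegral.integral_mul_const, hm, integral_sub_midpoint_eq_zero, zero_mul]
    _ ≤ ∫ x in a..b, (x - m) * f x := by
      refine intervalIntegral.integral_mono_on hab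
        (Continuous.intervalIntegrable (by fun_prop) a b)
        (hf_int.continuousOn_mul (by fun_prop)) fun x hx ↦ ?_
      rcases le_total x m with hxm | hmx
      · exact mul_le_mul_of_nonpos_left (hf hx hm_mem hxm) (sub_nonpos.2 hxm)
      · exact mul_le_mul_of_nonneg_left (hf hm_mem hx hmx) (sub_nonneg.2 hmx)

/-- The kernel `x ↦ (s - x)^{-α}` of the Caputo derivative at time `s`, without the factor
`1 / Γ(1 - α)`. The power is inverted, as in the coefficients, rather than given a negative
exponent; the two can differ for `x > s`, where `Real.rpow` has a negative base. -/
noncomputable def abelKernel (α s x : ℝ) : ℝ := ((s - x) ^ α)⁻¹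

section AbelKernel

variable {α s x : ℝ}

theorem abelKernel_pos (hx : x < s) : 0 < abelKernel α s x :=
  inv_pos.2 (rpow_pos_of_pos (sub_pos.2 hx) α)

theorem continuousOn_abelKernel : ContinuousOn (abelKernel α s) (Set.Iio s) :=
  ContinuousOn.inv₀
    (ContinuousOn.rpow_const (by fun_prop) fun _ hx ↦ Or.inl (sub_pos.2 hx).ne')
    fun _ hx ↦ (rpow_pos_of_pos (sub_pos.2 hx) α).ne'

theorem monotoneOn_abelKernel (hα : 0 ≤ α) : MonotoneOn (abelKernel α s) (Set.Iio s) :=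
  fun _ _ _ hy hxy ↦ inv_anti₀ (rpow_pos_of_pos (sub_pos.2 hy) α)
    (rpow_le_rpow (sub_pos.2 hy).le (sub_le_sub_left hxy s) hα)

end AbelKernel

theorem ccoef_eq_integral_abelKernel (α : ℝ) (t : ℕ → ℝ) (j k : ℕ) :
    ccoef α t j k = 2 * tau t j ^ 2 / (tau t (j + 1) * (tau t j + tau t (j + 1))) *
      ∫ θ in (0:ℝ)..1, (θ - (0 + 1) / 2) *
        abelKernel α (tstar α t k) (t (j - 1) + θ * tau t j) := by
  rw [ccoef, ← intervalIntegral.integral_const_mul]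
  refine intervalIntegral.integral_congr fun θ _ ↦ ?_
  simp only [abelKernel, div_eq_mul_inv, mul_inv]
  ring

theorem acoef_eq_integral_abelKernel (α : ℝ) (t : ℕ → ℝ) (j k : ℕ) :
    acoef α t j k = -((tau t j + tau t (j + 1))⁻¹ *
      ∫ θ in (0:ℝ)..1, (2 * tau t j * (1 - θ) + tau t (j + 1)) *
        abelKernel α (tstar α t k) (t (j - 1) + θ * tau t j)) := by
  rw [acoef, ← intervalIntegral.integral_const_mul, ← intervalIntegral.integral_neg]
  refine intervalIntegral.integral_congr fun θ _ ↦ ?_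
  simp only [abelKernel, div_eq_mul_inv, mul_inv]
  ring

section Mesh

variable {α : ℝ} {t : ℕ → ℝ} {j k : ℕ}

theorem tau_pos_s6 (ht : StrictMonoOn t (Set.Iic k)) (hj : 1 ≤ j) (hjk : j ≤ k) : 0 < tau t j :=
  sub_pos.2 (ht (Set.mem_Iic.2 (by omega)) hjk (by omega))

theorem lt_tstar_s6 (hα : α < 2) (ht : StrictMonoOn t (Set.Iic k)) (hjk : j < k) :
    t j < tstar α t k :=
  calc
    t j ≤ t (k - 1) := ht.monotoneOn hjk.le (Nat.sub_le k 1) (by omega)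
    _ < tstar α t k :=
      lt_add_of_pos_right _ (mul_pos (by linarith) (tau_pos_s6 ht (by omega) le_rfl))

theorem mapsTo_cell_Iio_tstar (hα : α < 2) (ht : StrictMonoOn t (Set.Iic k)) (hj : 1 ≤ j)
    (hjk : j < k) :
    Set.MapsTo (fun θ ↦ t (j - 1) + θ * tau t j) (Set.Icc 0 1) (Set.Iio (tstar α t k)) :=
  fun θ hθ ↦ calc
    t (j - 1) + θ * tau t j ≤ t (j - 1) + tau t j := by
      gcongr
      exact mul_le_of_le_one_left (tau_pos_s6 ht hj hjk.le).le hθ.2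
    _ = t j := add_sub_cancel _ _
    _ < tstar α t k := lt_tstar_s6 hα ht hjk

theorem ccoef_nonneg (hα : α ∈ Set.Ico 0 2) (ht : StrictMonoOn t (Set.Iic k)) (hj : 1 ≤ j)
    (hjk : j < k) : 0 ≤ ccoef α t j k := by
  have hτ : 0 < tau t j := tau_pos_s6 ht hj hjk.le
  have hτ' : 0 < tau t (j + 1) := tau_pos_s6 ht (by omega) hjk
  have hcell : Monotone fun θ ↦ t (j - 1) + θ * tau t j :=
    fun _ _ h ↦ add_le_add_right (mul_le_mul_of_nonneg_right h hτ.le) _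
  rw [ccoef_eq_integral_abelKernel]
  exact mul_nonneg (by positivity) <| integral_sub_midpoint_mul_nonneg zero_le_one <|
    (monotoneOn_abelKernel hα.1).comp (hcell.monotoneOn _) (mapsTo_cell_Iio_tstar hα.2 ht hj hjk)

theorem acoef_neg (hα : α < 2) (ht : StrictMonoOn t (Set.Iic k)) (hj : 1 ≤ j) (hjk : j < k) :
    acoef α t j k < 0 := by
  have hτ : 0 < tau t j := tau_pos_s6 ht hj hjk.le
  have hτ' : 0 < tau t (j + 1) := tau_pos_s6 ht (by omega) hjk
  have hcell := mapsTo_cell_Iio_tstar hα ht hj hjk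
  rw [acoef_eq_integral_abelKernel, neg_lt_zero]
  refine mul_pos (by positivity) <| intervalIntegral.intervalIntegral_pos_of_pos_on
    (ContinuousOn.intervalIntegrable_of_Icc zero_le_one ?_) (fun θ hθ ↦ ?_) zero_lt_one
  · exact ContinuousOn.mul (by fun_prop) (continuousOn_abelKernel.comp (by fun_prop) hcell)
  · have hθ' : 0 < 1 - θ := sub_pos.2 hθ.2
    exact mul_pos (by positivity) (abelKernel_pos (hcell (Set.Ioo_subset_Icc_self hθ)))

theorem dcoef_pos_general (hα : α ∈ Set.Ico 0 2) (ht : StrictMonoOn t (Set.Iic k)) (hj : 2 ≤ j)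
    (hjk : j < k) : 0 < dcoef α t j k :=
  sub_pos.2 <| (acoef_neg hα.2 ht (by omega) hjk).trans_le <|
    ccoef_nonneg hα ht (by omega) (by omega)

end Mesh

/-- (P7): `d_j^k = c_{j-1}^k - a_j^k > 0` for `k ≥ 3`, `2 ≤ j ≤ k-1`. -/
theorem dcoef_pos (α : ℝ) (hα : α ∈ Set.Ioo (0:ℝ) 1)
    (t : ℕ → ℝ) (ht0 : t 0 = 0) (hmono : StrictMono t)
    (k j : ℕ) (hk : 3 ≤ k) (hj1 : 2 ≤ j) (hj2 : j ≤ k - 1) :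
    dcoef α t j k > 0 :=
  dcoef_pos_general ⟨hα.1.le, by linarith [hα.2]⟩ (hmono.strictMonoOn _) hj1 (by omega)
end

section
/- Suppose the nonuniform time mesh satisfies the mesh ratio condition 1/ρ_{j+1} ≥ 1/(ρ_j²(1+ρ_j)) − 3 for all j ≥ 2. Then for every α ∈ (0,1) and all indices k ≥ 4 and 2 ≤ j ≤ k−2, the quantities d_j^k = c_{j−1}^k − a_j^k satisfy d_{j+1}^k − d_j^k > 0. -/
open MeasureTheory Real Finset

/- Write `g_j` for the kernel `x ↦ (t_k^* - x)^(-α)` on the `j`-th mesh interval, rescaled to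
`[0,1]`, and `M_j = ∫ (2θ - 1) g_j` for its first moment. Then
`d_{j+1}^k - d_j^k = (c_j^k + a_j^k) - a_{j+1}^k - c_{j-1}^k`, where
* `c_j^k + a_j^k = (τ_j / τ_{j+1}) M_j - ∫ g_j`, and `∫ g_j + 3 M_j ≤ g_j 1` since `g_j` is
  convex;
* `-a_{j+1}^k` is an average of the increasing function `g_{j+1}`, so it exceeds
  `g_{j+1} 0 = g_j 1`;
* `c_{j-1}^k = τ_{j-1}² / (τ_j (τ_{j-1} + τ_j)) M_{j-1} ≤ (τ_j / τ_{j+1} + 3) M_j`, because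
  convexity of the kernel gives `M_{j-1} / τ_{j-1} ≤ M_j / τ_j`, and the mesh condition compares
  the factors. -/

section FirstMoment

/-- The first moment of `g : [0,1] → ℝ` about the midpoint, scaled by `2` to match the weight in
the coefficients `c_j^k`. -/
noncomputable def firstMoment (g : ℝ → ℝ) : ℝ := ∫ θ in (0 : ℝ)..1, (2 * θ - 1) * g θ

variable {f g : ℝ → ℝ}

theorem intervalIntegrable_of_monotoneOn_Icc {a b : ℝ} (hab : a ≤ b)
    (hg : MonotoneOn g (Set.Icc a b)) : IntervalIntegrable g volume a b :=
  MonotoneOn.intervalIntegrable (by rwa [Set.uIcc_of_le hab])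

theorem firstMoment_const (c : ℝ) : firstMoment (fun _ => c) = 0 := by
  have hweight : ∫ θ in (0 : ℝ)..1, (2 * θ - 1) = 0 := by
    rw [intervalIntegral.integral_comp_mul_sub (f := fun x => x) two_ne_zero]
    norm_num
  rw [firstMoment, intervalIntegral.integral_mul_const, hweight, zero_mul]

theorem firstMoment_const_mul (c : ℝ) : firstMoment (fun θ => c * g θ) = c * firstMoment g := by
  simp only [firstMoment, mul_left_comm _ c, intervalIntegral.integral_const_mul]

theorem firstMoment_sub (hf : IntervalIntegrable f volume 0 1)
    (hg : IntervalIntegrable g volume 0 1) :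
    firstMoment (fun θ => f θ - g θ) = firstMoment f - firstMoment g := by
  simp only [firstMoment, mul_sub]
  exact intervalIntegral.integral_sub (hf.continuousOn_mul (by fun_prop))
    (hg.continuousOn_mul (by fun_prop))

theorem firstMoment_nonneg_of_monotoneOn (hg : MonotoneOn g (Set.Icc 0 1)) :
    0 ≤ firstMoment g := by
  have centered : firstMoment (fun θ => g θ - g (1 / 2)) = firstMoment g := by
    rw [firstMoment_sub (intervalIntegrable_of_monotoneOn_Icc zero_le_one hg)
      intervalIntegrable_const, firstMoment_const, sub_zero]
  rw [← centered]
  refine intervalIntegral.integral_nonneg zero_le_one fun θ hθ => ?_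
  have hmid : (1 / 2 : ℝ) ∈ Set.Icc 0 1 := by norm_num
  rcases le_total θ (1 / 2) with h | h
  · exact mul_nonneg_of_nonpos_of_nonpos (by linarith) (sub_nonpos.2 (hg hθ hmid h))
  · exact mul_nonneg (by linarith) (sub_nonneg.2 (hg hmid hθ h))

theorem integral_one_add_mul_weight_mul (hg : IntervalIntegrable g volume 0 1) (w : ℝ) :
    ∫ θ in (0 : ℝ)..1, (1 + w * (2 * θ - 1)) * g θ
      = (∫ θ in (0 : ℝ)..1, g θ) + w * firstMoment g := by
  rw [firstMoment, ← intervalIntegral.integral_const_mul, ← intervalIntegral.integral_add hg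
    ((hg.continuousOn_mul (by fun_prop)).const_mul w)]
  congr 1 with θ
  ring

theorem lt_integral_add_mul_firstMoment (hg : StrictMonoOn g (Set.Icc 0 1)) {w : ℝ}
    (hw : |w| ≤ 1) : g 0 < (∫ θ in (0 : ℝ)..1, g θ) + w * firstMoment g := by
  have hgi := intervalIntegrable_of_monotoneOn_Icc zero_le_one hg.monotoneOn
  have hgint := hgi.sub (intervalIntegrable_const (c := g 0))
  have hpos : 0 < ∫ θ in (0 : ℝ)..1, (1 + w * (2 * θ - 1)) * (g θ - g 0) := by
    refine intervalIntegral.intervalIntegral_pos_of_pos_on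
      (hgint.continuousOn_mul (by fun_prop)) (fun θ hθ => ?_) zero_lt_one
    have hweight : 0 < 1 + w * (2 * θ - 1) := by
      have hcentre : |2 * θ - 1| < 1 := abs_lt.2 ⟨by linarith [hθ.1], by linarith [hθ.2]⟩
      have hsmall : |w * (2 * θ - 1)| < 1 := by
        rw [abs_mul]
        exact (mul_le_of_le_one_left (abs_nonneg _) hw).trans_lt hcentre
      linarith [(abs_lt.1 hsmall).1]
    exact mul_pos hweight (sub_pos.2 (hg (by simp) ⟨hθ.1.le, hθ.2.le⟩ hθ.1))
  rw [integral_one_add_mul_weight_mul hgint, firstMoment_sub hgi intervalIntegrable_const,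
    firstMoment_const, intervalIntegral.integral_sub hgi intervalIntegrable_const] at hpos
  simp only [intervalIntegral.integral_const, sub_zero, one_smul] at hpos
  linarith

theorem integral_one_add_three_mul_weight_mul_affine (a m : ℝ) :
    ∫ θ in (0 : ℝ)..1, (1 + 3 * (2 * θ - 1)) * (a + m * (θ - 1)) = a := by
  have expand (θ : ℝ) : (1 + 3 * (2 * θ - 1)) * (a + m * (θ - 1))
      = (2 * m - 2 * a) + ((6 * a - 8 * m) * θ + 6 * m * θ ^ 2) := by ring
  simp only [expand]
  rw [intervalIntegral.integral_add, intervalIntegral.integral_add,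
    intervalIntegral.integral_const_mul, intervalIntegral.integral_const_mul, integral_id,
    integral_pow, intervalIntegral.integral_const]
  · norm_num
    ring
  all_goals exact Continuous.intervalIntegrable (by fun_prop) _ _

theorem integral_add_three_mul_firstMoment_le (hg : ConvexOn ℝ (Set.Icc 0 1) g)
    (hgi : IntervalIntegrable g volume 0 1) :
    (∫ θ in (0 : ℝ)..1, g θ) + 3 * firstMoment g ≤ g 1 := by
  -- The weight `1 + 3 (2θ - 1)` changes sign at `1/3`, where `g` crosses its secant line through
  -- `1/3` and `1`.
  set m := (g (1 / 3) - g 1) / (1 / 3 - 1)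
  rw [← integral_one_add_mul_weight_mul hgi,
    ← integral_one_add_three_mul_weight_mul_affine (g 1) m]
  refine intervalIntegral.integral_mono_on zero_le_one (hgi.continuousOn_mul (by fun_prop))
    (Continuous.intervalIntegrable (by fun_prop) _ _) fun θ hθ => ?_
  rcases hθ.2.eq_or_lt with rfl | hθ1
  · simp
  have hone : (1 : ℝ) ∈ Set.Icc 0 1 := by simp
  have hthird : (1 / 3 : ℝ) ∈ Set.Icc 0 1 := by norm_num
  have hneg : θ - 1 < 0 := sub_neg.2 hθ1
  rcases le_total θ (1 / 3) with h | h
  · have hslope : (g θ - g 1) / (θ - 1) ≤ m :=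
      hg.secant_mono hone hθ hthird hθ1.ne (by norm_num) h
    have habove : g 1 + m * (θ - 1) ≤ g θ := by linarith [(div_le_iff_of_neg hneg).1 hslope]
    exact mul_le_mul_of_nonpos_left habove (by linarith)
  · have hslope : m ≤ (g θ - g 1) / (θ - 1) :=
      hg.secant_mono hone hthird hθ (by norm_num) hθ1.ne h
    have hbelow : g θ ≤ g 1 + m * (θ - 1) := by linarith [(le_div_iff_of_neg hneg).1 hslope]
    exact mul_le_mul_of_nonneg_left hbelow (by linarith)

end FirstMoment

section Convex

variable {f : ℝ → ℝ} {s : Set ℝ} {a b c d : ℝ}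

theorem convexOn_slope_le_slope (hf : ConvexOn ℝ s f) (ha : a ∈ s) (hb : b ∈ s) (hc : c ∈ s)
    (hd : d ∈ s) (hab : a < b) (hcd : c < d) (hac : a ≤ c) (hbd : b ≤ d) :
    slope f a b ≤ slope f c d :=
  calc slope f a b ≤ slope f a d :=
        hf.slope_mono ha ⟨hb, hab.ne'⟩ ⟨hd, (hab.trans_le hbd).ne'⟩ hbd
    _ = slope f d a := slope_comm ..
    _ ≤ slope f d c := hf.slope_mono hd ⟨ha, (hac.trans_lt hcd).ne⟩ ⟨hc, hcd.ne⟩ hac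
    _ = slope f c d := slope_comm ..

theorem monotoneOn_sub_mul_lineMap_of_convexOn (hf : ConvexOn ℝ s f) (ha : a ∈ s) (hb : b ∈ s)
    (hc : c ∈ s) (hd : d ∈ s) (hab : a < b) (hcd : c < d) (hac : a ≤ c) (hbd : b ≤ d) :
    MonotoneOn (fun θ => (b - a) * (f ∘ AffineMap.lineMap c d) θ
      - (d - c) * (f ∘ AffineMap.lineMap a b) θ) (Set.Icc (0 : ℝ) 1) := by
  intro x hx y hy hxy
  rcases hxy.eq_or_lt with rfl | hlt
  · rfl
  have hslope := convexOn_slope_le_slope hf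
    (hf.1.mapsTo_lineMap ha hb hx) (hf.1.mapsTo_lineMap ha hb hy)
    (hf.1.mapsTo_lineMap hc hd hx) (hf.1.mapsTo_lineMap hc hd hy)
    ((lineMap_lt_lineMap_iff_of_lt hlt).2 hab)
    ((lineMap_lt_lineMap_iff_of_lt hlt).2 hcd)
    (lineMap_mono_endpoints hac hbd hx.1 hx.2)
    (lineMap_mono_endpoints hac hbd hy.1 hy.2)
  have hlength (u v : ℝ) : AffineMap.lineMap u v y - AffineMap.lineMap u v x
      = (y - x) * (v - u) := by
    simp only [AffineMap.lineMap_apply_ring']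
    ring
  have hba := sub_pos.2 hab
  have hdc := sub_pos.2 hcd
  have hyx := sub_pos.2 hlt
  rw [slope_def_field, slope_def_field, hlength, hlength,
    div_le_div_iff₀ (mul_pos hyx hba) (mul_pos hyx hdc)] at hslope
  simp only [Function.comp_apply]
  nlinarith

theorem mul_firstMoment_lineMap_le_of_convexOn (hf : ConvexOn ℝ s f) (ha : a ∈ s) (hb : b ∈ s)
    (hc : c ∈ s) (hd : d ∈ s) (hab : a < b) (hcd : c < d) (hac : a ≤ c) (hbd : b ≤ d)
    (hf_ab : IntervalIntegrable (f ∘ AffineMap.lineMap a b) volume 0 1)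
    (hf_cd : IntervalIntegrable (f ∘ AffineMap.lineMap c d) volume 0 1) :
    (d - c) * firstMoment (f ∘ AffineMap.lineMap a b)
      ≤ (b - a) * firstMoment (f ∘ AffineMap.lineMap c d) := by
  have h := firstMoment_nonneg_of_monotoneOn
    (monotoneOn_sub_mul_lineMap_of_convexOn hf ha hb hc hd hab hcd hac hbd)
  rw [firstMoment_sub (hf_cd.const_mul _) (hf_ab.const_mul _), firstMoment_const_mul,
    firstMoment_const_mul] at h
  exact sub_nonneg.1 h

theorem convexOn_rpow_of_nonpos {p : ℝ} (hp : p ≤ 0) :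
    ConvexOn ℝ (Set.Ioi 0) fun x : ℝ => x ^ p := by
  have hlog : ConvexOn ℝ (Set.Ioi 0) fun x => p * log x :=
    (strictConcaveOn_log_Ioi.concaveOn.neg.smul (neg_nonneg.2 hp)).congr fun x _ => by simp
  have himage : Convex ℝ ((fun x => p * log x) '' Set.Ioi 0) := by
    refine (isPreconnected_Ioi.image _ ?_).ordConnected.convex
    exact continuousOn_const.mul (continuousOn_log.mono fun x hx => (Set.mem_Ioi.1 hx).ne')
  have hexp : ConvexOn ℝ (Set.Ioi 0) fun x => exp (p * log x) :=
    (convexOn_exp.subset (Set.subset_univ _) himage).comp hlog (exp_monotone.monotoneOn _)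
  exact hexp.congr fun x hx => by rw [rpow_def_of_pos hx, mul_comm]

end Convex

section MemoryKernel

/-- The kernel `(T - x)^(-α)` of the Caputo derivative at time `T`, in the form in which it enters
the coefficients; it is meaningful for `x < T`. -/
noncomputable def memoryKernel (α T x : ℝ) : ℝ := ((T - x) ^ α)⁻¹

variable {α T : ℝ}

theorem strictMonoOn_memoryKernel (hα : 0 < α) :
    StrictMonoOn (memoryKernel α T) (Set.Iio T) := by
  intro x _ y hy hxy
  have hT : 0 < T - y := sub_pos.2 hy
  exact inv_strictAnti₀ (rpow_pos_of_pos hT α)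
    (rpow_lt_rpow hT.le (sub_lt_sub_left hxy T) hα)

theorem convexOn_memoryKernel (hα : 0 ≤ α) : ConvexOn ℝ (Set.Iio T) (memoryKernel α T) := by
  have hreflect : ConvexOn ℝ (Set.Iio T)
      ((· ^ (-α)) ∘ (AffineMap.const ℝ ℝ T - AffineMap.id ℝ ℝ)) :=
    ((convexOn_rpow_of_nonpos (neg_nonpos.2 hα)).comp_affineMap _).subset
      (fun _ hx => sub_pos.2 (Set.mem_Iio.1 hx)) (convex_Iio T)
  exact hreflect.congr fun x hx => rpow_neg (sub_pos.2 (Set.mem_Iio.1 hx)).le α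

end MemoryKernel

section Coefficients

/-- The kernel at `t_k^*` on the `j`-th mesh interval `[t_{j-1}, t_j]`, rescaled to `[0,1]`. -/
noncomputable def stepKernel (α : ℝ) (t : ℕ → ℝ) (j k : ℕ) : ℝ → ℝ :=
  memoryKernel α (tstar α t k) ∘ AffineMap.lineMap (t (j - 1)) (t j)

variable {α : ℝ} {t : ℕ → ℝ} {j k : ℕ}

theorem stepKernel_apply (θ : ℝ) : stepKernel α t j k θ
    = ((tstar α t k - (t (j - 1) + θ * tau t j)) ^ α)⁻¹ := by
  rw [stepKernel, Function.comp_apply, memoryKernel, AffineMap.lineMap_apply_ring', tau, add_comm]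

theorem stepKernel_succ_zero : stepKernel α t (j + 1) k 0 = stepKernel α t j k 1 := by
  simp only [stepKernel, Function.comp_apply, AffineMap.lineMap_apply_zero,
    AffineMap.lineMap_apply_one, Nat.add_sub_cancel]

theorem strictMonoOn_stepKernel (hα : 0 < α) (hstep : t (j - 1) < t j)
    (hj : t j < tstar α t k) : StrictMonoOn (stepKernel α t j k) (Set.Icc 0 1) :=
  (strictMonoOn_memoryKernel hα).comp
    (fun _ _ _ _ h => (lineMap_lt_lineMap_iff_of_lt h).2 hstep)
    ((convex_Iio _).mapsTo_lineMap (hstep.trans hj) hj)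

theorem convexOn_stepKernel (hα : 0 ≤ α) (hstep : t (j - 1) < t j)
    (hj : t j < tstar α t k) : ConvexOn ℝ (Set.Icc 0 1) (stepKernel α t j k) :=
  ((convexOn_memoryKernel hα).comp_affineMap _).subset
    ((convex_Iio _).mapsTo_lineMap (Set.mem_Iio.2 (hstep.trans hj)) hj).subset_preimage
    (convex_Icc 0 1)

theorem intervalIntegrable_stepKernel (hα : 0 < α) (hstep : t (j - 1) < t j)
    (hj : t j < tstar α t k) : IntervalIntegrable (stepKernel α t j k) volume 0 1 :=
  intervalIntegrable_of_monotoneOn_Icc zero_le_one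
    (strictMonoOn_stepKernel hα hstep hj).monotoneOn

theorem tau_succ_mul_firstMoment_stepKernel_le (hα : 0 < α) (hstep : t (j - 1) < t j)
    (hstep' : t j < t (j + 1)) (hj : t (j + 1) < tstar α t k) :
    tau t (j + 1) * firstMoment (stepKernel α t j k)
      ≤ tau t j * firstMoment (stepKernel α t (j + 1) k) :=
  mul_firstMoment_lineMap_le_of_convexOn (convexOn_memoryKernel hα.le)
    (hstep.trans (hstep'.trans hj)) (hstep'.trans hj) (hstep'.trans hj) hj hstep hstep'
    hstep.le hstep'.le (intervalIntegrable_stepKernel hα hstep (hstep'.trans hj))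
    (intervalIntegrable_stepKernel hα hstep' hj)

theorem ccoef_eq_mul_firstMoment : ccoef α t j k
    = tau t j ^ 2 / (tau t (j + 1) * (tau t j + tau t (j + 1)))
      * firstMoment (stepKernel α t j k) := by
  rw [ccoef, firstMoment, ← intervalIntegral.integral_const_mul]
  congr 1 with θ
  rw [stepKernel_apply, mul_div_mul_comm, div_eq_mul_inv (2 * θ - 1)]

theorem neg_acoef_eq_integral_add_mul_firstMoment (hτ : tau t j + tau t (j + 1) ≠ 0)
    (hgint : IntervalIntegrable (stepKernel α t j k) volume 0 1) :
    -acoef α t j k = (∫ θ in (0 : ℝ)..1, stepKernel α t j k θ)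
      + -(tau t j / (tau t j + tau t (j + 1))) * firstMoment (stepKernel α t j k) := by
  rw [← integral_one_add_mul_weight_mul hgint, acoef, ← intervalIntegral.integral_neg]
  congr 1 with θ
  rw [stepKernel_apply, div_mul_eq_div_div, div_eq_mul_inv _ (_ ^ α), ← neg_mul]
  congr 1
  field_simp
  ring

theorem stepKernel_zero_lt_neg_acoef (hα : 0 < α) (hstep : t (j - 1) < t j)
    (hstep' : t j < t (j + 1)) (hj : t j < tstar α t k) :
    stepKernel α t j k 0 < -acoef α t j k := by
  have hτ : 0 < tau t j := sub_pos.2 hstep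
  have hτ' : 0 < tau t (j + 1) := sub_pos.2 hstep'
  have hweight : |-(tau t j / (tau t j + tau t (j + 1)))| ≤ 1 := by
    rw [abs_neg, abs_of_pos (by positivity), div_le_one (by positivity)]
    linarith
  rw [neg_acoef_eq_integral_add_mul_firstMoment (by positivity)
    (intervalIntegrable_stepKernel hα hstep hj)]
  exact lt_integral_add_mul_firstMoment (strictMonoOn_stepKernel hα hstep hj) hweight

theorem ccoef_add_acoef (hτ' : tau t (j + 1) ≠ 0) (hτ : tau t j + tau t (j + 1) ≠ 0)
    (hgint : IntervalIntegrable (stepKernel α t j k) volume 0 1) :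
    ccoef α t j k + acoef α t j k
      = tau t j / tau t (j + 1) * firstMoment (stepKernel α t j k)
        - ∫ θ in (0 : ℝ)..1, stepKernel α t j k θ := by
  have hfactor : tau t j / tau t (j + 1)
      = tau t j ^ 2 / (tau t (j + 1) * (tau t j + tau t (j + 1)))
        + tau t j / (tau t j + tau t (j + 1)) := by
    field_simp
  rw [ccoef_eq_mul_firstMoment, hfactor]
  linear_combination -neg_acoef_eq_integral_add_mul_firstMoment hτ hgint

theorem mul_firstMoment_sub_lt_ccoef_sub (hα : 0 < α) (hstep : t (j - 1) < t j)
    (hstep' : t j < t (j + 1)) (hstep'' : t (j + 1) < t (j + 2))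
    (hj : t (j + 1) < tstar α t k) :
    (tau t j / tau t (j + 1) + 3) * firstMoment (stepKernel α t j k)
      < ccoef α t j k + acoef α t j k - acoef α t (j + 1) k := by
  have hτ : 0 < tau t j := sub_pos.2 hstep
  have hτ' : 0 < tau t (j + 1) := sub_pos.2 hstep'
  have hgint := intervalIntegrable_stepKernel hα hstep (hstep'.trans hj)
  have hconvex := integral_add_three_mul_firstMoment_le
    (convexOn_stepKernel hα.le hstep (hstep'.trans hj)) hgint
  have haverage := stepKernel_zero_lt_neg_acoef (j := j + 1) hα hstep' hstep'' hj
  rw [stepKernel_succ_zero] at haverage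
  rw [ccoef_add_acoef hτ'.ne' (by positivity) hgint]
  linarith

theorem ccoef_le_mul_firstMoment_succ (hα : 0 < α) (hstep : t (j - 1) < t j)
    (hstep' : t j < t (j + 1)) (hj : t (j + 1) < tstar α t k) :
    ccoef α t j k ≤ 1 / (rho t (j + 1) ^ 2 * (1 + rho t (j + 1)))
      * firstMoment (stepKernel α t (j + 1) k) := by
  have hτ : 0 < tau t j := sub_pos.2 hstep
  have hτ' : 0 < tau t (j + 1) := sub_pos.2 hstep'
  have hmoment : firstMoment (stepKernel α t j k)
      ≤ tau t j / tau t (j + 1) * firstMoment (stepKernel α t (j + 1) k) := by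
    rw [div_mul_eq_mul_div, le_div_iff₀' hτ']
    exact tau_succ_mul_firstMoment_stepKernel_le hα hstep hstep' hj
  calc ccoef α t j k
      ≤ tau t j ^ 2 / (tau t (j + 1) * (tau t j + tau t (j + 1)))
        * (tau t j / tau t (j + 1) * firstMoment (stepKernel α t (j + 1) k)) := by
        rw [ccoef_eq_mul_firstMoment]
        gcongr
    _ = 1 / (rho t (j + 1) ^ 2 * (1 + rho t (j + 1)))
        * firstMoment (stepKernel α t (j + 1) k) := by
        rw [rho, Nat.add_sub_cancel]
        field_simp

end Coefficients

theorem lt_tstar_s8 {α : ℝ} (hα : α < 2) {t : ℕ → ℝ} (hmono : StrictMono t) {i k : ℕ}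
    (hik : i < k) : t i < tstar α t k := by
  have hτ : 0 < tau t k := sub_pos.2 (hmono (by lia))
  have hσ : 0 < 1 - α / 2 := by linarith
  calc t i ≤ t (k - 1) := hmono.monotone (by lia)
    _ < tstar α t k := lt_add_of_pos_right _ (mul_pos hσ hτ)

theorem dcoef_diff_j_pos_general {α : ℝ} (hα : 0 < α) {t : ℕ → ℝ} (hmono : StrictMono t)
    {k j : ℕ} (hj : 2 ≤ j) (hjk : t (j + 1) < tstar α t k)
    (hmesh : 1 / rho t (j + 1) ≥ 1 / (rho t j ^ 2 * (1 + rho t j)) - 3) :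
    dcoef α t (j + 1) k - dcoef α t j k > 0 := by
  obtain ⟨i, rfl⟩ : ∃ i, j = i + 2 := Nat.exists_eq_add_of_le' hj
  have hstep (n : ℕ) : t n < t (n + 1) := hmono n.lt_succ_self
  have hmoment : 0 ≤ firstMoment (stepKernel α t (i + 2) k) := firstMoment_nonneg_of_monotoneOn
    (strictMonoOn_stepKernel hα (hstep (i + 1)) ((hstep _).trans hjk)).monotoneOn
  have hratio : 1 / rho t (i + 3) = tau t (i + 2) / tau t (i + 3) := one_div_div ..
  have hprev : ccoef α t (i + 1) k
      ≤ (tau t (i + 2) / tau t (i + 3) + 3) * firstMoment (stepKernel α t (i + 2) k) := by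
    refine (ccoef_le_mul_firstMoment_succ hα (hstep i) (hstep _) ((hstep _).trans hjk)).trans
      (mul_le_mul_of_nonneg_right ?_ hmoment)
    rw [← hratio]
    exact sub_le_iff_le_add.1 hmesh
  have hnext := mul_firstMoment_sub_lt_ccoef_sub (j := i + 2) hα (hstep (i + 1)) (hstep _)
    (hstep _) hjk
  simp only [dcoef, Nat.add_sub_cancel, Nat.add_succ_sub_one]
  linarith

/-- (P9): under the mesh-ratio condition `1/ρ_{j+1} ≥ 1/(ρ_j²(1+ρ_j)) - 3` for all `j ≥ 2`,
one has `d_{j+1}^k - d_j^k > 0` for `k ≥ 4`, `2 ≤ j ≤ k-2`. -/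
theorem dcoef_diff_j_pos (α : ℝ) (hα : α ∈ Set.Ioo (0:ℝ) 1)
    (t : ℕ → ℝ) (ht0 : t 0 = 0) (hmono : StrictMono t)
    (hmesh : ∀ j : ℕ, 2 ≤ j →
      1 / rho t (j + 1) ≥ 1 / (rho t j ^ 2 * (1 + rho t j)) - 3)
    (k j : ℕ) (hk : 4 ≤ k) (hj1 : 2 ≤ j) (hj2 : j ≤ k - 2) :
    dcoef α t (j + 1) k - dcoef α t j k > 0 :=
  dcoef_diff_j_pos_general hα.1 hmono hj1 (lt_tstar_s8 (by linarith [hα.2]) hmono (by lia))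
    (hmesh j hj1)
end

section
/- Suppose the nonuniform time mesh satisfies the mesh ratio condition 1/ρ_{j+1} ≥ 1/(ρ_j²(1+ρ_j)) − 3 for all j ≥ 2. Then for every α ∈ (0,1) and all indices k ≥ 4 and 2 ≤ j ≤ k−2, the quantities d_j^k = c_{j−1}^k − a_j^k satisfy d_{j+1}^k − d_j^k > d_{j+1}^{k+1} − d_j^{k+1}. -/
/-!
For a fixed node index `j`, the coefficient `d_j^k` is a linear functional `D_j` of the kernel
`(t_k^* - s)^(-α)`: a combination of means and first moments over the cells `[t_{j-2}, t_{j-1}]`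
and `[t_{j-1}, t_j]`. The claim is therefore `(D_{j+1} - D_j) f > 0` for the difference `f` of the
kernels at `t_k^*` and `t_{k+1}^*`, which is convex with a positive derivative `m` at
`a = t_{j-1}`. Write `f = g + m • id`; by convexity `g` decreases to the left of `a` and increases
to its right, and monotonicity on each side alone gives `(D_{j+1} - D_j) g ≥ 0`. What remains is
`(D_{j+1} - D_j) id > 0`, an explicit rational inequality in the step sizes, and this is where the
mesh-ratio condition enters.
-/

open MeasureTheory Real Finset

section Convex

variable {S : Set ℝ} {f : ℝ → ℝ} {a m : ℝ}

lemma convexOn_sub_const_mul (hf : ConvexOn ℝ S f) (m : ℝ) :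
    ConvexOn ℝ S (fun x ↦ f x - m * x) :=
  hf.sub ((LinearMap.mulLeft ℝ m).concaveOn hf.1)

lemma isMinOn_sub_const_mul_of_convexOn (hf : ConvexOn ℝ S f) (ha : a ∈ interior S)
    (hm : HasDerivAt f m a) : IsMinOn (fun x ↦ f x - m * x) S a := by
  have hderiv : HasDerivAt (fun x ↦ f x - m * x) 0 a :=
    (hm.sub ((hasDerivAt_id a).const_mul m)).congr_deriv (by simp)
  exact (convexOn_sub_const_mul hf m).isMinOn_of_rightDeriv_eq_zero ha
    (hderiv.hasDerivWithinAt.derivWithin (uniqueDiffWithinAt_Ioi a))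

lemma monotoneOn_of_convexOn_of_isMinOn (hf : ConvexOn ℝ S f) (ha : a ∈ S)
    (hmin : IsMinOn f S a) : MonotoneOn f (S ∩ Set.Ici a) := fun _ hu _ hv huv ↦
  (hf.le_max_of_mem_Icc ha hv.1 ⟨hu.2, huv⟩).trans (max_le (hmin hv.1) le_rfl)

lemma antitoneOn_of_convexOn_of_isMinOn (hf : ConvexOn ℝ S f) (ha : a ∈ S)
    (hmin : IsMinOn f S a) : AntitoneOn f (S ∩ Set.Iic a) := fun _ hu _ hv huv ↦
  (hf.le_max_of_mem_Icc hu.1 ha ⟨huv, hv.2⟩).trans (max_le le_rfl (hmin hu.1))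

end Convex

/-- Integrability of `f` over the cell `[a, b]`, in the coordinate `θ ∈ [0, 1]`. -/
def CellIntegrable (f : ℝ → ℝ) (a b : ℝ) : Prop :=
  IntervalIntegrable (fun θ ↦ f (a + θ * (b - a))) volume 0 1

/-- The mean of `f` over the cell `[a, b]`. -/
noncomputable def cellMean (f : ℝ → ℝ) (a b : ℝ) : ℝ :=
  ∫ θ in (0 : ℝ)..1, f (a + θ * (b - a))

/-- The first moment of `f` about the midpoint of the cell `[a, b]`, normalised so that the weight
runs from `-1` to `1`. -/
noncomputable def cellMoment (f : ℝ → ℝ) (a b : ℝ) : ℝ :=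
  ∫ θ in (0 : ℝ)..1, (2 * θ - 1) * f (a + θ * (b - a))

section Cell

variable {f g : ℝ → ℝ} {a b θ : ℝ}

lemma add_mul_sub_mem_Icc (hab : a ≤ b) (hθ : θ ∈ Set.Icc (0 : ℝ) 1) :
    a + θ * (b - a) ∈ Set.Icc a b :=
  ⟨by nlinarith [hθ.1], by nlinarith [hθ.2]⟩

lemma monotone_add_mul_sub (hab : a ≤ b) : Monotone fun θ : ℝ ↦ a + θ * (b - a) :=
  fun _ _ h ↦ by have := sub_nonneg.2 hab; dsimp only; gcongr

lemma cellIntegrable_of_continuousOn (hab : a ≤ b) (hf : ContinuousOn f (Set.Icc a b)) :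
    CellIntegrable f a b := by
  refine (hf.comp (by fun_prop) fun θ hθ ↦ ?_).intervalIntegrable
  exact add_mul_sub_mem_Icc hab (by rwa [Set.uIcc_of_le zero_le_one] at hθ)

lemma cellIntegrable_of_monotoneOn (hab : a ≤ b) (hf : MonotoneOn f (Set.Icc a b)) :
    CellIntegrable f a b := by
  refine MonotoneOn.intervalIntegrable fun θ hθ η hη h ↦ ?_
  rw [Set.uIcc_of_le zero_le_one] at hθ hη
  exact hf (add_mul_sub_mem_Icc hab hθ) (add_mul_sub_mem_Icc hab hη) (monotone_add_mul_sub hab h)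

lemma CellIntegrable.neg (hf : CellIntegrable f a b) : CellIntegrable (fun s ↦ -f s) a b :=
  IntervalIntegrable.neg hf

lemma CellIntegrable.weighted (hf : CellIntegrable f a b) :
    IntervalIntegrable (fun θ ↦ (2 * θ - 1) * f (a + θ * (b - a))) volume 0 1 :=
  hf.continuousOn_mul (by fun_prop)

lemma cellIntegrable_of_antitoneOn (hab : a ≤ b) (hf : AntitoneOn f (Set.Icc a b)) :
    CellIntegrable f a b := by
  simpa using (cellIntegrable_of_monotoneOn hab hf.neg).neg

lemma cellMean_add (hf : CellIntegrable f a b) (hg : CellIntegrable g a b) :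
    cellMean (fun s ↦ f s + g s) a b = cellMean f a b + cellMean g a b :=
  intervalIntegral.integral_add hf hg

lemma cellMoment_add (hf : CellIntegrable f a b) (hg : CellIntegrable g a b) :
    cellMoment (fun s ↦ f s + g s) a b = cellMoment f a b + cellMoment g a b := by
  simp only [cellMoment, mul_add]
  exact intervalIntegral.integral_add hf.weighted hg.weighted

lemma cellMean_const_mul (c : ℝ) (f : ℝ → ℝ) (a b : ℝ) :
    cellMean (fun s ↦ c * f s) a b = c * cellMean f a b :=
  intervalIntegral.integral_const_mul c _

lemma cellMoment_const_mul (c : ℝ) (f : ℝ → ℝ) (a b : ℝ) :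
    cellMoment (fun s ↦ c * f s) a b = c * cellMoment f a b := by
  simp only [cellMoment, mul_left_comm _ c, intervalIntegral.integral_const_mul]

lemma cellMean_id (a b : ℝ) : cellMean (fun s ↦ s) a b = (a + b) / 2 := by
  rw [cellMean, intervalIntegral.integral_add (by simp) (by simp)]
  simp only [intervalIntegral.integral_const, intervalIntegral.integral_mul_const, integral_id,
    smul_eq_mul]
  ring

lemma integral_two_mul_sub_one : ∫ θ in (0 : ℝ)..1, (2 * θ - 1) = 0 := by
  rw [intervalIntegral.integral_sub (Continuous.intervalIntegrable (by fun_prop) _ _) (by simp),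
    intervalIntegral.integral_const_mul, integral_id]
  simp

lemma cellMoment_id (a b : ℝ) : cellMoment (fun s ↦ s) a b = (b - a) / 6 := by
  have hderiv (θ : ℝ) : HasDerivAt (fun θ ↦ (θ ^ 2 - θ) * a + (2 / 3 * θ ^ 3 - θ ^ 2 / 2) * (b - a))
      ((2 * θ - 1) * (a + θ * (b - a))) θ := by
    refine ((((hasDerivAt_pow 2 θ).sub (hasDerivAt_id θ)).mul_const a).add
      ((((hasDerivAt_pow 3 θ).const_mul (2 / 3)).sub
        ((hasDerivAt_pow 2 θ).div_const 2)).mul_const (b - a))).congr_deriv ?_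
    norm_num
    ring
  rw [cellMoment, intervalIntegral.integral_eq_sub_of_hasDerivAt (fun θ _ ↦ hderiv θ)
    (Continuous.intervalIntegrable (by fun_prop) _ _)]
  ring

lemma cellMean_le_of_monotoneOn (hab : a ≤ b) (hf : MonotoneOn f (Set.Icc a b)) :
    cellMean f a b ≤ f b := by
  calc cellMean f a b ≤ ∫ _ in (0 : ℝ)..1, f b :=
        intervalIntegral.integral_mono_on zero_le_one (cellIntegrable_of_monotoneOn hab hf)
          (by simp) fun θ hθ ↦
          have hmem := add_mul_sub_mem_Icc hab hθ
          hf hmem (Set.right_mem_Icc.2 hab) hmem.2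
    _ = f b := by simp

lemma le_cellMean_sub_mul_cellMoment_of_monotoneOn {c : ℝ} (hab : a ≤ b)
    (hf : MonotoneOn f (Set.Icc a b)) (hc : |c| ≤ 1) :
    f a ≤ cellMean f a b - c * cellMoment f a b := by
  have hint := cellIntegrable_of_monotoneOn hab hf
  calc f a = ∫ θ in (0 : ℝ)..1, (f a - c * f a * (2 * θ - 1)) := by
        rw [intervalIntegral.integral_sub (by simp)
          (Continuous.intervalIntegrable (by fun_prop) _ _), intervalIntegral.integral_const_mul,
          integral_two_mul_sub_one]
        simp
    _ ≤ ∫ θ in (0 : ℝ)..1,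
          (f (a + θ * (b - a)) - c * ((2 * θ - 1) * f (a + θ * (b - a)))) := by
        refine intervalIntegral.integral_mono_on zero_le_one
          (Continuous.intervalIntegrable (by fun_prop) _ _)
          (IntervalIntegrable.sub hint (hint.weighted.const_mul c)) fun θ hθ ↦ ?_
        have hmem := add_mul_sub_mem_Icc hab hθ
        have hle := hf (Set.left_mem_Icc.2 hab) hmem hmem.1
        have hweight : 0 ≤ 1 - c * (2 * θ - 1) := by
          nlinarith [hθ.1, hθ.2, (abs_le.1 hc).1, (abs_le.1 hc).2]
        linarith [mul_le_mul_of_nonneg_left hle hweight]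
    _ = cellMean f a b - c * cellMoment f a b := by
        rw [intervalIntegral.integral_sub hint (hint.weighted.const_mul c),
          intervalIntegral.integral_const_mul, cellMean, cellMoment]

lemma cellMoment_nonneg_of_monotoneOn (hab : a ≤ b) (hf : MonotoneOn f (Set.Icc a b)) :
    0 ≤ cellMoment f a b := by
  calc 0 = ∫ θ in (0 : ℝ)..1, (2 * θ - 1) * f (a + 1 / 2 * (b - a)) := by
        rw [intervalIntegral.integral_mul_const, integral_two_mul_sub_one, zero_mul]
    _ ≤ cellMoment f a b := by
        refine intervalIntegral.integral_mono_on zero_le_one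
          (Continuous.intervalIntegrable (by fun_prop) _ _)
          (cellIntegrable_of_monotoneOn hab hf).weighted fun θ hθ ↦ ?_
        have hmem := add_mul_sub_mem_Icc hab hθ
        have hmid := add_mul_sub_mem_Icc (θ := 1 / 2) hab (by norm_num)
        rcases le_total θ (1 / 2) with h | h
        · exact mul_le_mul_of_nonpos_left (hf hmem hmid (monotone_add_mul_sub hab h))
            (by linarith)
        · exact mul_le_mul_of_nonneg_left (hf hmid hmem (monotone_add_mul_sub hab h))
            (by linarith)

lemma cellMoment_nonpos_of_antitoneOn (hab : a ≤ b) (hf : AntitoneOn f (Set.Icc a b)) :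
    cellMoment f a b ≤ 0 := by
  have h := cellMoment_nonneg_of_monotoneOn hab hf.neg
  have hneg : cellMoment (fun s ↦ -f s) a b = -cellMoment f a b := by simp [cellMoment]
  linarith

end Cell

/-- The coefficient `d_j^k` at four consecutive nodes `p, q, r, s = t_{j-2}, …, t_{j+1}`, as a
linear functional of the kernel: `f` stands in for `(t_k^* - ·)^(-α)`. -/
noncomputable def dFunctional (p q r s : ℝ) (f : ℝ → ℝ) : ℝ :=
  (q - p) ^ 2 / ((r - q) * (r - p)) * cellMoment f p q + cellMean f q r
    - (r - q) / (s - q) * cellMoment f q r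

section DFunctional

variable {p q r s u : ℝ} {f g : ℝ → ℝ}

lemma dFunctional_add (hf₁ : CellIntegrable f p q) (hf₂ : CellIntegrable f q r)
    (hg₁ : CellIntegrable g p q) (hg₂ : CellIntegrable g q r) (s : ℝ) :
    dFunctional p q r s (fun x ↦ f x + g x) = dFunctional p q r s f + dFunctional p q r s g := by
  simp only [dFunctional, cellMean_add hf₂ hg₂, cellMoment_add hf₁ hg₁, cellMoment_add hf₂ hg₂]
  ring

lemma dFunctional_const_mul (p q r s c : ℝ) (f : ℝ → ℝ) :
    dFunctional p q r s (fun x ↦ c * f x) = c * dFunctional p q r s f := by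
  simp only [dFunctional, cellMean_const_mul, cellMoment_const_mul]
  ring

lemma dFunctional_id (p q r s : ℝ) :
    dFunctional p q r s (fun x ↦ x) =
      (q - p) ^ 3 / ((r - q) * (r - p)) / 6 + (q + r) / 2 - (r - q) ^ 2 / (s - q) / 6 := by
  rw [dFunctional, cellMean_id, cellMoment_id, cellMoment_id]
  ring

lemma dFunctional_shift_sub (hqr : q < r) (hrs : r < s) (p u : ℝ) (f : ℝ → ℝ) :
    dFunctional q r s u f - dFunctional p q r s f =
      (cellMean f r s - (s - r) / (u - r) * cellMoment f r s) - cellMean f q r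
        + (r - q) / (s - r) * cellMoment f q r
        - (q - p) ^ 2 / ((r - q) * (r - p)) * cellMoment f p q := by
  have hcoef : (r - q) ^ 2 / ((s - r) * (s - q)) + (r - q) / (s - q) = (r - q) / (s - r) := by
    have h₁ : s - r ≠ 0 := by linarith
    have h₂ : s - q ≠ 0 := by linarith
    field_simp
    ring
  rw [dFunctional, dFunctional, ← hcoef]
  ring

lemma dFunctional_le_shift_of_antitoneOn_of_monotoneOn (hpq : p ≤ q) (hqr : q < r) (hrs : r < s)
    (hsu : s ≤ u) (hanti : AntitoneOn f (Set.Icc p q)) (hmono : MonotoneOn f (Set.Icc q s)) :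
    dFunctional p q r s f ≤ dFunctional q r s u f := by
  have hmono_qr := hmono.mono (Set.Icc_subset_Icc_right hrs.le)
  have hmono_rs := hmono.mono (Set.Icc_subset_Icc_left hqr.le)
  have hratio : |(s - r) / (u - r)| ≤ 1 := by
    rw [abs_of_nonneg (div_nonneg (by linarith) (by linarith)), div_le_one (by linarith)]
    linarith
  have hmean_le := cellMean_le_of_monotoneOn hqr.le hmono_qr
  have hle_mean := le_cellMean_sub_mul_cellMoment_of_monotoneOn hrs.le hmono_rs hratio
  have hmoment_qr : 0 ≤ (r - q) / (s - r) * cellMoment f q r :=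
    mul_nonneg (div_nonneg (by linarith) (by linarith))
      (cellMoment_nonneg_of_monotoneOn hqr.le hmono_qr)
  have hmoment_pq : (q - p) ^ 2 / ((r - q) * (r - p)) * cellMoment f p q ≤ 0 :=
    mul_nonpos_of_nonneg_of_nonpos
      (div_nonneg (sq_nonneg _) (mul_nonneg (by linarith) (by linarith)))
      (cellMoment_nonpos_of_antitoneOn hpq hanti)
  linarith [dFunctional_shift_sub hqr hrs p u f]

lemma dFunctional_id_lt_shift (hpq : p ≤ q) (hqr : q < r) (hrs : r < s) (hsu : s ≤ u)
    (hmesh : (q - p) ^ 3 / ((r - q) ^ 2 * (r - p)) ≤ (r - q) / (s - r) + 3) :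
    dFunctional p q r s (fun x ↦ x) < dFunctional q r s u (fun x ↦ x) := by
  have hcurrent : (r - q) ^ 2 / (s - q) / 6 + (r - q) ^ 3 / ((s - r) * (s - q)) / 6 =
      (r - q) / 6 * ((r - q) / (s - r)) := by
    have h₁ : s - r ≠ 0 := by linarith
    have h₂ : s - q ≠ 0 := by linarith
    field_simp
    ring
  have hprevious : (q - p) ^ 3 / ((r - q) * (r - p)) / 6 =
      (r - q) / 6 * ((q - p) ^ 3 / ((r - q) ^ 2 * (r - p))) := by
    have h₁ : r - q ≠ 0 := by linarith
    have h₂ : r - p ≠ 0 := by linarith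
    field_simp
  have hnext : (s - r) ^ 2 / (u - r) / 6 < (s - r) / 2 := by
    rw [div_div, div_lt_div_iff₀ (by linarith) two_pos]
    nlinarith [mul_nonneg (sub_pos.2 hrs).le (sub_nonneg.2 hsu), pow_pos (sub_pos.2 hrs) 2]
  have hscaled := mul_le_mul_of_nonneg_left hmesh (show 0 ≤ (r - q) / 6 by linarith)
  rw [dFunctional_id, dFunctional_id]
  linarith

theorem dFunctional_lt_shift_of_convexOn {m : ℝ} (hpq : p < q) (hqr : q < r) (hrs : r < s)
    (hsu : s ≤ u) (hmesh : (q - p) ^ 3 / ((r - q) ^ 2 * (r - p)) ≤ (r - q) / (s - r) + 3)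
    (hf : ConvexOn ℝ (Set.Icc p s) f) (hderiv : HasDerivAt f m q) (hm : 0 < m) :
    dFunctional p q r s f < dFunctional q r s u f := by
  set g : ℝ → ℝ := fun x ↦ f x - m * x with hg
  have hqS : q ∈ Set.Icc p s := ⟨hpq.le, by linarith⟩
  have hmin : IsMinOn g (Set.Icc p s) q := isMinOn_sub_const_mul_of_convexOn hf
    (by rw [interior_Icc]; exact ⟨hpq, by linarith⟩) hderiv
  have hg_convex : ConvexOn ℝ (Set.Icc p s) g := convexOn_sub_const_mul hf m
  have hanti : AntitoneOn g (Set.Icc p q) :=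
    (antitoneOn_of_convexOn_of_isMinOn hg_convex hqS hmin).mono fun x hx ↦
      ⟨⟨hx.1, by linarith [hx.2]⟩, hx.2⟩
  have hmono : MonotoneOn g (Set.Icc q s) :=
    (monotoneOn_of_convexOn_of_isMinOn hg_convex hqS hmin).mono fun x hx ↦
      ⟨⟨by linarith [hx.1], hx.2⟩, hx.1⟩
  have hint_pq := cellIntegrable_of_antitoneOn hpq.le hanti
  have hint_qr := cellIntegrable_of_monotoneOn hqr.le
    (hmono.mono (Set.Icc_subset_Icc_right hrs.le))
  have hint_rs := cellIntegrable_of_monotoneOn hrs.le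
    (hmono.mono (Set.Icc_subset_Icc_left hqr.le))
  have hint_linear (a b : ℝ) : CellIntegrable (fun x ↦ m * x) a b :=
    Continuous.intervalIntegrable (by fun_prop) _ _
  have hf_eq : f = fun x ↦ g x + m * x := by simp [hg]
  rw [hf_eq, dFunctional_add hint_pq hint_qr (hint_linear _ _) (hint_linear _ _),
    dFunctional_add hint_qr hint_rs (hint_linear _ _) (hint_linear _ _),
    dFunctional_const_mul, dFunctional_const_mul]
  exact add_lt_add_of_le_of_lt
    (dFunctional_le_shift_of_antitoneOn_of_monotoneOn hpq.le hqr hrs hsu hanti hmono)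
    (mul_lt_mul_of_pos_left (dFunctional_id_lt_shift hpq.le hqr hrs hsu hmesh) hm)

end DFunctional

/-- The weakly singular kernel `s ↦ (T - s)^(-β)`, meaningful for `s < T`. -/
noncomputable def powerKernel (β T s : ℝ) : ℝ := (T - s) ^ (-β)

/-- The decrease of `powerKernel` when the singularity moves from `T` to `T'`. -/
noncomputable def kernelDiff (β T T' s : ℝ) : ℝ := powerKernel β T s - powerKernel β T' s

section Kernel

variable {β T T' s : ℝ}

lemma hasDerivAt_powerKernel (β : ℝ) (hs : s < T) :
    HasDerivAt (powerKernel β T) (β * powerKernel (β + 1) T s) s := by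
  refine (((hasDerivAt_id s).const_sub T).rpow_const (p := -β)
    (Or.inl (sub_pos.2 hs).ne')).congr_deriv ?_
  simp only [powerKernel, id_eq, neg_add']
  ring

lemma continuousOn_powerKernel (β T : ℝ) : ContinuousOn (powerKernel β T) (Set.Iio T) :=
  fun _ hs ↦ (hasDerivAt_powerKernel β hs).continuousAt.continuousWithinAt

lemma cellIntegrable_powerKernel {a b : ℝ} (hab : a ≤ b) (hb : b < T) (β : ℝ) :
    CellIntegrable (powerKernel β T) a b :=
  cellIntegrable_of_continuousOn hab
    ((continuousOn_powerKernel β T).mono fun _ hx ↦ hx.2.trans_lt hb)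

lemma kernelDiff_pos (hβ : 0 < β) (hT : T < T') (hs : s < T) : 0 < kernelDiff β T T' s :=
  sub_pos.2 (Real.rpow_lt_rpow_of_neg (sub_pos.2 hs) (sub_lt_sub_right hT s) (neg_neg_of_pos hβ))

lemma hasDerivAt_kernelDiff (β : ℝ) (hT : T ≤ T') (hs : s < T) :
    HasDerivAt (kernelDiff β T T') (β * kernelDiff (β + 1) T T' s) s :=
  ((hasDerivAt_powerKernel β hs).sub (hasDerivAt_powerKernel β (hs.trans_le hT))).congr_deriv
    (mul_sub _ _ _).symm

lemma convexOn_kernelDiff (hβ : 0 ≤ β) (hT : T < T') :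
    ConvexOn ℝ (Set.Iio T) (kernelDiff β T T') := by
  refine convexOn_of_hasDerivWithinAt2_nonneg (convex_Iio T)
    (f' := fun s ↦ β * kernelDiff (β + 1) T T' s)
    (f'' := fun s ↦ β * ((β + 1) * kernelDiff (β + 1 + 1) T T' s))
    (fun s hs ↦ (hasDerivAt_kernelDiff β hT.le hs).continuousAt.continuousWithinAt) ?_ ?_ ?_ <;>
    rw [interior_Iio] <;> intro s hs
  · exact (hasDerivAt_kernelDiff β hT.le hs).hasDerivWithinAt
  · exact ((hasDerivAt_kernelDiff (β + 1) hT.le hs).const_mul β).hasDerivWithinAt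
  · have := kernelDiff_pos (β := β + 1 + 1) (by linarith) hT hs
    positivity

lemma dFunctional_kernelDiff {p q r : ℝ} (hpq : p ≤ q) (hqr : q ≤ r) (hT : r < T) (hTT' : T ≤ T')
    (β s : ℝ) :
    dFunctional p q r s (kernelDiff β T T') =
      dFunctional p q r s (powerKernel β T) - dFunctional p q r s (powerKernel β T') := by
  have hint {S a b : ℝ} (hab : a ≤ b) (hb : b ≤ r) (hS : T ≤ S) :
      CellIntegrable (powerKernel β S) a b :=
    cellIntegrable_powerKernel hab (by linarith) β
  have hdiff {a b : ℝ} (hab : a ≤ b) (hb : b ≤ r) : CellIntegrable (kernelDiff β T T') a b :=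
    IntervalIntegrable.sub (hint hab hb le_rfl) (hint hab hb hTT')
  rw [eq_sub_iff_add_eq, ← dFunctional_add (hdiff hpq hqr) (hdiff hqr le_rfl)
    (hint hpq hqr hTT') (hint hqr le_rfl hTT')]
  simp [kernelDiff]

theorem dFunctional_shift_powerKernel_lt {p q r s u : ℝ} (hpq : p < q) (hqr : q < r) (hrs : r < s)
    (hsu : s ≤ u) (hmesh : (q - p) ^ 3 / ((r - q) ^ 2 * (r - p)) ≤ (r - q) / (s - r) + 3)
    (hβ : 0 < β) (hT : s < T) (hTT' : T < T') :
    dFunctional q r s u (powerKernel β T') - dFunctional p q r s (powerKernel β T') <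
      dFunctional q r s u (powerKernel β T) - dFunctional p q r s (powerKernel β T) := by
  have hqT : q < T := by linarith
  have hlt := dFunctional_lt_shift_of_convexOn hpq hqr hrs hsu hmesh
    ((convexOn_kernelDiff hβ.le hTT').subset (fun _ hx ↦ hx.2.trans_lt hT) (convex_Icc p s))
    (hasDerivAt_kernelDiff β hTT'.le hqT)
    (mul_pos hβ (kernelDiff_pos (by linarith) hTT' hqT))
  rw [dFunctional_kernelDiff hpq.le hqr.le (hrs.trans hT) hTT'.le,
    dFunctional_kernelDiff hqr.le hrs.le hT hTT'.le] at hlt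
  linarith

end Kernel

section Mesh

variable {α : ℝ} {t : ℕ → ℝ} {i k : ℕ}

lemma tau_succ (t : ℕ → ℝ) (j : ℕ) : tau t (j + 1) = t (j + 1) - t j := rfl

lemma tau_add_tau (t : ℕ → ℝ) (i : ℕ) : tau t (i + 1) + tau t (i + 2) = t (i + 2) - t i :=
  sub_add_sub_cancel' _ _ _

lemma tau_succ_pos (hmono : StrictMono t) (j : ℕ) : 0 < tau t (j + 1) :=
  sub_pos.2 (hmono (Nat.lt_succ_self j))

lemma lt_tstar_succ (hα : α < 2) (hmono : StrictMono t) (k : ℕ) :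
    t k < tstar α t (k + 1) :=
  lt_add_of_pos_right _ (mul_pos (by linarith) (tau_succ_pos hmono k))

lemma tstar_succ_le (hα : 0 ≤ α) (hmono : StrictMono t) (k : ℕ) :
    tstar α t (k + 1) ≤ t (k + 1) := by
  have h := mul_nonneg hα (tau_succ_pos hmono k).le
  rw [tau_succ] at h
  rw [tstar, tau_succ, Nat.add_sub_cancel]
  linarith

lemma one_div_rho_succ_ge_iff (hmono : StrictMono t) (i : ℕ) :
    1 / rho t (i + 3) ≥ 1 / (rho t (i + 2) ^ 2 * (1 + rho t (i + 2))) - 3 ↔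
      (t (i + 1) - t i) ^ 3 / ((t (i + 2) - t (i + 1)) ^ 2 * (t (i + 2) - t i)) ≤
        (t (i + 2) - t (i + 1)) / (t (i + 3) - t (i + 2)) + 3 := by
  have hx : 0 < tau t (i + 1) := tau_succ_pos hmono i
  have hy : 0 < tau t (i + 2) := tau_succ_pos hmono (i + 1)
  have hcubic : 1 / ((tau t (i + 2) / tau t (i + 1)) ^ 2 * (1 + tau t (i + 2) / tau t (i + 1))) =
      tau t (i + 1) ^ 3 / (tau t (i + 2) ^ 2 * (tau t (i + 1) + tau t (i + 2))) := by
    field_simp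
  rw [rho, rho, Nat.add_succ_sub_one, Nat.add_succ_sub_one, hcubic, ← tau_succ, ← tau_succ,
    ← tau_succ, ← tau_add_tau, one_div_div, ge_iff_le, sub_le_iff_le_add]

lemma tstar_sub_cell_pos {θ : ℝ} (hmono : StrictMono t) (hT : t (i + 1) < tstar α t k)
    (hθ : θ ∈ Set.Icc (0 : ℝ) 1) : 0 < tstar α t k - (t i + θ * tau t (i + 1)) :=
  sub_pos.2 ((add_mul_sub_mem_Icc (hmono (Nat.lt_succ_self i)).le hθ).2.trans_lt hT)

lemma ccoef_succ_eq (hmono : StrictMono t) (hT : t (i + 1) < tstar α t k) :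
    ccoef α t (i + 1) k = tau t (i + 1) ^ 2 / (tau t (i + 2) * (tau t (i + 1) + tau t (i + 2))) *
      cellMoment (powerKernel α (tstar α t k)) (t i) (t (i + 1)) := by
  rw [cellMoment, ← intervalIntegral.integral_const_mul]
  refine intervalIntegral.integral_congr fun θ hθ ↦ ?_
  rw [Set.uIcc_of_le zero_le_one] at hθ
  have hpos := tstar_sub_cell_pos hmono hT hθ
  simp only [powerKernel, Nat.add_sub_cancel]
  rw [← tau_succ, Real.rpow_neg hpos.le, mul_div_mul_comm, div_eq_mul_inv (2 * θ - 1)]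

lemma acoef_succ_eq (hmono : StrictMono t) (hT : t (i + 1) < tstar α t k) :
    acoef α t (i + 1) k = tau t (i + 1) / (tau t (i + 1) + tau t (i + 2)) *
        cellMoment (powerKernel α (tstar α t k)) (t i) (t (i + 1))
      - cellMean (powerKernel α (tstar α t k)) (t i) (t (i + 1)) := by
  have hint := cellIntegrable_powerKernel (hmono (Nat.lt_succ_self i)).le hT α
  rw [cellMoment, cellMean, ← intervalIntegral.integral_const_mul,
    ← intervalIntegral.integral_sub (hint.weighted.const_mul _) hint]
  refine intervalIntegral.integral_congr fun θ hθ ↦ ?_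
  rw [Set.uIcc_of_le zero_le_one] at hθ
  have hpos := tstar_sub_cell_pos hmono hT hθ
  have hsum : tau t (i + 1) + tau t (i + 2) ≠ 0 :=
    (add_pos (tau_succ_pos hmono i) (tau_succ_pos hmono (i + 1))).ne'
  simp only [powerKernel, Nat.add_sub_cancel]
  rw [← tau_succ, Real.rpow_neg hpos.le]
  have := (Real.rpow_pos_of_pos hpos α).ne'
  field_simp
  ring

lemma dcoef_eq_dFunctional (hmono : StrictMono t) (hT : t (i + 2) < tstar α t k) :
    dcoef α t (i + 2) k =
      dFunctional (t i) (t (i + 1)) (t (i + 2)) (t (i + 3)) (powerKernel α (tstar α t k)) := by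
  have hT' : t (i + 1) < tstar α t k := (hmono (Nat.lt_succ_self _)).trans hT
  rw [dcoef, acoef_succ_eq hmono hT, Nat.add_succ_sub_one, ccoef_succ_eq hmono hT', tau_add_tau,
    tau_add_tau, tau_succ, tau_succ, dFunctional]
  ring

end Mesh

theorem dcoef_second_diff_general (α : ℝ) (hα : α ∈ Set.Ioo (0 : ℝ) 2)
    (t : ℕ → ℝ) (hmono : StrictMono t) (k j : ℕ) (hj : 2 ≤ j) (hjk : j + 2 ≤ k)
    (hmesh : 1 / rho t (j + 1) ≥ 1 / (rho t j ^ 2 * (1 + rho t j)) - 3) :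
    dcoef α t (j + 1) k - dcoef α t j k
      > dcoef α t (j + 1) (k + 1) - dcoef α t j (k + 1) := by
  obtain ⟨i, rfl⟩ := Nat.exists_eq_add_of_le' hj
  obtain ⟨l, rfl⟩ := Nat.exists_eq_add_of_le' (show 1 ≤ k by omega)
  have hstep (n : ℕ) : t n < t (n + 1) := hmono (Nat.lt_succ_self n)
  have hT : t (i + 3) < tstar α t (l + 1) :=
    (hmono.monotone (by omega)).trans_lt (lt_tstar_succ hα.2 hmono l)
  have hTT' : tstar α t (l + 1) < tstar α t (l + 1 + 1) :=
    (tstar_succ_le hα.1.le hmono l).trans_lt (lt_tstar_succ hα.2 hmono (l + 1))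
  have hT₂ : t (i + 2) < tstar α t (l + 1) := (hstep _).trans hT
  rw [dcoef_eq_dFunctional hmono hT₂, dcoef_eq_dFunctional hmono (hT₂.trans hTT'),
    dcoef_eq_dFunctional (i := i + 1) hmono hT,
    dcoef_eq_dFunctional (i := i + 1) hmono (hT.trans hTT')]
  exact dFunctional_shift_powerKernel_lt (hstep i) (hstep (i + 1)) (hstep (i + 2))
    (hstep (i + 3)).le ((one_div_rho_succ_ge_iff hmono i).1 hmesh) hα.1 hT hTT'

/-- (P10): under the mesh-ratio condition `1/ρ_{j+1} ≥ 1/(ρ_j²(1+ρ_j)) - 3` for all `j ≥ 2`,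
one has `d_{j+1}^k - d_j^k > d_{j+1}^{k+1} - d_j^{k+1}` for `k ≥ 4`, `2 ≤ j ≤ k-2`. -/
theorem dcoef_second_diff (α : ℝ) (hα : α ∈ Set.Ioo (0:ℝ) 1)
    (t : ℕ → ℝ) (ht0 : t 0 = 0) (hmono : StrictMono t)
    (hmesh : ∀ j : ℕ, 2 ≤ j →
      1 / rho t (j + 1) ≥ 1 / (rho t j ^ 2 * (1 + rho t j)) - 3)
    (k j : ℕ) (hk : 4 ≤ k) (hj1 : 2 ≤ j) (hj2 : j ≤ k - 2) :
    dcoef α t (j + 1) k - dcoef α t j k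
      > dcoef α t (j + 1) (k + 1) - dcoef α t j (k + 1) :=
  dcoef_second_diff_general α ⟨hα.1, hα.2.trans one_lt_two⟩ t hmono k j hj1 (by omega) (hmesh j hj1)
end

section
/- For every α ∈ (0,1), every nonuniform time mesh, and all indices k ≥ 2 and 1 ≤ j ≤ k−1, the L2-1_σ coefficient a_j^k admits the representation a_j^k = −(t_k^* − t_j)^{−α} + (α τ_j/(τ_j + τ_{j+1})) ∫_0^1 (τ_j + τ_{j+1} + s τ_j)(1 − s)(t_k^* − t_j + s τ_j)^{−α−1} ds. -/
open MeasureTheory Real Finset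

/-!
With `A = t_k^* - t_j`, `p = τ_j` and `q = τ_{j+1}`, the substitution `s = 1 - θ` turns the kernel
of `a_j^k` into `(A + s p)^{-α}` and its weight into `(-2 p s - q) / (p + q)`. The numerator
`-2 p s - q` is the derivative of `(p + q + s p) (1 - s)`, the primitive that vanishes at `s = 1`;
integrating by parts against it leaves only the boundary term at `s = 0`.
-/

theorem add_mul_pos_of_mem_Icc {A p s : ℝ} (hA : 0 < A) (hAp : 0 < A + p)
    (hs : s ∈ Set.Icc (0 : ℝ) 1) : 0 < A + s * p := by
  have hconvex := convex_Ioi (0 : ℝ) hA hAp (sub_nonneg.2 hs.2) hs.1 (sub_add_cancel 1 s)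
  calc 0 < (1 - s) • A + s • (A + p) := hconvex
    _ = A + s * p := by simp only [smul_eq_mul]; ring

theorem integral_deriv_mul_add_mul_rpow {f f' : ℝ → ℝ} {a b A p : ℝ} (β : ℝ)
    (hne : ∀ s ∈ Set.uIcc a b, A + s * p ≠ 0)
    (hf : ∀ s ∈ Set.uIcc a b, HasDerivAt f (f' s) s) (hf' : IntervalIntegrable f' volume a b) :
    ∫ s in a..b, f' s * (A + s * p) ^ β
      = f b * (A + b * p) ^ β - f a * (A + a * p) ^ β
        - β * p * ∫ s in a..b, f s * (A + s * p) ^ (β - 1) := by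
  have hpow : ∀ s ∈ Set.uIcc a b,
      HasDerivAt (fun s => (A + s * p) ^ β) (p * β * (A + s * p) ^ (β - 1)) s := fun s hs =>
    ((hasDerivAt_mul_const p).const_add A).rpow_const (Or.inl (hne s hs))
  have hpow' : IntervalIntegrable (fun s => p * β * (A + s * p) ^ (β - 1)) volume a b :=
    (continuousOn_const.mul (ContinuousOn.rpow_const (by fun_prop)
      fun s hs => Or.inl (hne s hs))).intervalIntegrable
  have hparts := intervalIntegral.integral_mul_deriv_eq_deriv_mul hpow hf hpow' hf'
  simpa only [← intervalIntegral.integral_const_mul, mul_comm, mul_left_comm] using hparts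

theorem integral_sub_mul_add_mul_rpow_neg {A p : ℝ} (hA : 0 < A) (hAp : 0 < A + p) (α q : ℝ) :
    ∫ s in (0 : ℝ)..1, (-2 * p * s - q) * (A + s * p) ^ (-α)
      = -(p + q) * A ^ (-α)
        + α * p * ∫ s in (0 : ℝ)..1, (p + q + s * p) * (1 - s) * (A + s * p) ^ (-α - 1) := by
  have hne : ∀ s ∈ Set.uIcc (0 : ℝ) 1, A + s * p ≠ 0 := fun s hs =>
    (add_mul_pos_of_mem_Icc hA hAp (Set.uIcc_of_le (zero_le_one' ℝ) ▸ hs)).ne'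
  have hprimitive : ∀ s : ℝ,
      HasDerivAt (fun s => (p + q + s * p) * (1 - s)) (-2 * p * s - q) s := fun s =>
    (((hasDerivAt_mul_const p).const_add (p + q)).mul
      ((hasDerivAt_id' s).const_sub 1)).congr_deriv (by ring)
  rw [integral_deriv_mul_add_mul_rpow (-α) hne (fun s _ => hprimitive s)
    (Continuous.intervalIntegrable (by fun_prop) 0 1)]
  ring_nf

theorem sub_add_mul_tau_succ (t : ℕ → ℝ) (j : ℕ) (x θ : ℝ) :
    x - (t j + θ * tau t (j + 1)) = x - t (j + 1) + (1 - θ) * tau t (j + 1) := by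
  simp only [tau, Nat.add_sub_cancel]
  ring

theorem sub_add_tau_succ (t : ℕ → ℝ) (j : ℕ) (x : ℝ) :
    x - t (j + 1) + tau t (j + 1) = x - t j := by
  simp only [tau, Nat.add_sub_cancel, sub_add_sub_cancel]

theorem acoef_succ_eq_inv_mul_integral {α : ℝ} {t : ℕ → ℝ} {j k : ℕ}
    (hleft : t j < tstar α t k) (hright : t (j + 1) < tstar α t k) :
    acoef α t (j + 1) k
      = (tau t (j + 1) + tau t (j + 1 + 1))⁻¹ *
        ∫ s in (0 : ℝ)..1, (-2 * tau t (j + 1) * s - tau t (j + 1 + 1)) *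
          (tstar α t k - t (j + 1) + s * tau t (j + 1)) ^ (-α) := by
  let F : ℝ → ℝ := fun s => (-2 * tau t (j + 1) * s - tau t (j + 1 + 1)) *
    (tstar α t k - t (j + 1) + s * tau t (j + 1)) ^ (-α)
  have hintegrand : ∀ θ ∈ Set.uIcc (0 : ℝ) 1,
      (-2 * tau t (j + 1) * (1 - θ) - tau t (j + 1 + 1)) /
        ((tau t (j + 1) + tau t (j + 1 + 1)) *
          (tstar α t k - (t j + θ * tau t (j + 1))) ^ α)
      = (tau t (j + 1) + tau t (j + 1 + 1))⁻¹ * F (1 - θ) := by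
    intro θ hθ
    have hpos : 0 < tstar α t k - t (j + 1) + (1 - θ) * tau t (j + 1) :=
      add_mul_pos_of_mem_Icc (sub_pos.2 hright) (sub_add_tau_succ t j _ ▸ sub_pos.2 hleft)
        (Set.Icc.mem_iff_one_sub_mem.1 (Set.uIcc_of_le (zero_le_one' ℝ) ▸ hθ))
    simp only [F]
    rw [sub_add_mul_tau_succ, rpow_neg hpos.le, div_eq_mul_inv, mul_inv]
    ring
  calc acoef α t (j + 1) k
      = ∫ θ in (0 : ℝ)..1, (tau t (j + 1) + tau t (j + 1 + 1))⁻¹ * F (1 - θ) :=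
        intervalIntegral.integral_congr hintegrand
    _ = (tau t (j + 1) + tau t (j + 1 + 1))⁻¹ * ∫ s in (0 : ℝ)..1, F s := by
        rw [intervalIntegral.integral_const_mul, intervalIntegral.integral_comp_sub_left,
          sub_self, sub_zero]

theorem tau_succ_add_tau_succ_succ (t : ℕ → ℝ) (j : ℕ) :
    tau t (j + 1) + tau t (j + 1 + 1) = t (j + 2) - t j := by
  simp only [tau, Nat.add_sub_cancel]
  ring

theorem lt_tstar_of_lt {α : ℝ} {t : ℕ → ℝ} (hα : α < 2) (ht : StrictMono t) {j k : ℕ}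
    (hjk : j < k) : t j < tstar α t k := by
  have hstep : 0 < tau t k := sub_pos.2 (ht (Nat.sub_one_lt_of_lt hjk))
  calc t j ≤ t (k - 1) := ht.monotone (Nat.le_sub_one_of_lt hjk)
    _ < t (k - 1) + (1 - α / 2) * tau t k :=
      lt_add_of_pos_right _ (mul_pos (by linarith) hstep)

theorem acoef_repr_right_general {α : ℝ} {t : ℕ → ℝ} {j k : ℕ}
    (hleft : t j < tstar α t k) (hright : t (j + 1) < tstar α t k)
    (hne : t j ≠ t (j + 2)) :
    acoef α t (j + 1) k
      = -(tstar α t k - t (j + 1)) ^ (-α)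
        + α * tau t (j + 1) / (tau t (j + 1) + tau t (j + 1 + 1)) *
          ∫ s in (0 : ℝ)..1,
            (tau t (j + 1) + tau t (j + 1 + 1) + s * tau t (j + 1)) * (1 - s) *
              (tstar α t k - t (j + 1) + s * tau t (j + 1)) ^ (-α - 1) := by
  have hsum : tau t (j + 1) + tau t (j + 1 + 1) ≠ 0 :=
    tau_succ_add_tau_succ_succ t j ▸ sub_ne_zero.2 hne.symm
  have hstart : 0 < tstar α t k - t (j + 1) + tau t (j + 1) :=
    sub_add_tau_succ t j _ ▸ sub_pos.2 hleft
  rw [acoef_succ_eq_inv_mul_integral hleft hright,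
    integral_sub_mul_add_mul_rpow_neg (sub_pos.2 hright) hstart]
  field_simp

/-- Reformulation of `a_j^k` around `t_j` for `k ≥ 2`, `1 ≤ j ≤ k-1`. -/
theorem acoef_repr_right (α : ℝ) (hα : α ∈ Set.Ioo (0:ℝ) 1)
    (t : ℕ → ℝ) (ht0 : t 0 = 0) (hmono : StrictMono t)
    (k j : ℕ) (hk : 2 ≤ k) (hj1 : 1 ≤ j) (hj2 : j ≤ k - 1) :
    acoef α t j k
      = -(tstar α t k - t j) ^ (-α)
        + α * tau t j / (tau t j + tau t (j + 1)) *
          ∫ s in (0:ℝ)..1,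
            (tau t j + tau t (j + 1) + s * tau t j) * (1 - s) *
              (tstar α t k - t j + s * tau t j) ^ (-α - 1) := by
  obtain ⟨i, rfl⟩ := Nat.exists_eq_add_of_le' hj1
  have hlt : i + 1 < k := by omega
  have hα2 : α < 2 := hα.2.trans one_lt_two
  exact acoef_repr_right_general (lt_tstar_of_lt hα2 hmono (i.lt_succ_self.trans hlt))
    (lt_tstar_of_lt hα2 hmono hlt) (hmono (by omega)).ne
end

section
/- Let α ∈ (0,1), σ = 1 − α/2, and let ρ* ≈ 0.356341 be the unique positive root of ρ(1+ρ) = 1 − 3ρ²(1+ρ). Then for every ρ ≥ ρ*: (i) 2σ − (1−α)/ρ^α ≥ 0, and (ii) 2σ − (1−α) − [α(1−α)/((1+ρ)ρ^α)] ∫_0^1 s(ρ+s)/(σρ+s) ds ≥ 1 − 1/(4(1+ρ*)ρ*) ≥ 0. -/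
open MeasureTheory Real Finset

/-!
The equation for `ρ*` factors as `ρ* (1 + ρ*) (1 + 3 ρ*) = 1`. It forces `ρ* ≤ 1`, so the last
factor is at most `4` and `4 (1 + ρ*) ρ* ≥ 1`. Part (i) is Bernoulli's inequality
`ρ ^ (-α) ≤ 1 + α (ρ⁻¹ - 1)`, which is strong enough as soon as `ρ ≥ 1 / 5`. In part (ii) the
integrand is at most `s / σ`, so the integral is at most `1 / (2 σ) ≤ 1`, while
`α (1 - α) ≤ 1 / 4` and `(1 + ρ) ρ ^ α ≥ (1 + ρ*) ρ*`.
-/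

theorem half_sqrt_two_sub_one_le_iff {r : ℝ} (hr : 0 ≤ r) :
    (√2 - 1) / 2 ≤ r ↔ 1 ≤ 4 * (1 + r) * r :=
  calc (√2 - 1) / 2 ≤ r ↔ √2 ≤ 2 * r + 1 := by constructor <;> intro h <;> linarith
    _ ↔ 2 ≤ (2 * r + 1) ^ 2 := sqrt_le_left (by positivity)
    _ ↔ 1 ≤ 4 * (1 + r) * r := by constructor <;> intro h <;> linarith

theorem mem_Icc_of_cubic_root {r : ℝ} (hr : 0 < r)
    (hroot : r * (1 + r) = 1 - 3 * r ^ 2 * (1 + r)) : r ∈ Set.Icc ((√2 - 1) / 2) 1 := by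
  have hfactor : r * (1 + r) * (1 + 3 * r) = 1 := by linear_combination hroot
  have hr1 : r ≤ 1 := by
    by_contra! h
    have : 1 < r * ((1 + r) * (1 + 3 * r)) := one_lt_mul_of_lt_of_le h (by nlinarith)
    linarith
  refine ⟨(half_sqrt_two_sub_one_le_iff hr.le).2 ?_, hr1⟩
  calc 1 = r * (1 + r) * (1 + 3 * r) := hfactor.symm
    _ ≤ r * (1 + r) * 4 := by gcongr; linarith
    _ = 4 * (1 + r) * r := by ring

theorem mul_one_sub_le_one_quarter (x : ℝ) : x * (1 - x) ≤ 1 / 4 := by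
  linarith [sq_nonneg (2 * x - 1)]

section Exponent

variable {α ρ : ℝ}

theorem inv_rpow_le_one_add_mul (hα : α ∈ Set.Icc (0 : ℝ) 1) (hρ : 0 ≤ ρ) :
    (ρ ^ α)⁻¹ ≤ 1 + α * (ρ⁻¹ - 1) :=
  calc (ρ ^ α)⁻¹ = (1 + (ρ⁻¹ - 1)) ^ α := by rw [← inv_rpow hρ, add_sub_cancel]
    _ ≤ 1 + α * (ρ⁻¹ - 1) :=
      rpow_one_add_le_one_add_mul_self (by linarith [inv_nonneg.2 hρ]) hα.1 hα.2

theorem one_sub_div_rpow_le_two_sub (hα : α ∈ Set.Icc (0 : ℝ) 1) (hρ : 1 / 5 ≤ ρ) :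
    (1 - α) / ρ ^ α ≤ 2 - α := by
  have hρ0 : 0 < ρ := by linarith
  have hα' : 0 ≤ 1 - α := sub_nonneg.2 hα.2
  have hinv : ρ⁻¹ ≤ 5 := inv_le_of_inv_le₀ (by norm_num) (by linarith)
  calc (1 - α) / ρ ^ α = (1 - α) * (ρ ^ α)⁻¹ := div_eq_mul_inv _ _
    _ ≤ (1 - α) * (1 + α * (ρ⁻¹ - 1)) := by gcongr; exact inv_rpow_le_one_add_mul hα hρ0.le
    _ ≤ (1 - α) * (1 + α * (5 - 1)) := by gcongr; exact hα.1
    _ = 1 - α + 4 * (α * (1 - α)) := by ring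
    _ ≤ 2 - α := by linarith [mul_one_sub_le_one_quarter α]

theorem mul_one_sub_div_rpow_le {r : ℝ} (hα : α ∈ Set.Icc (0 : ℝ) 1) (hr : r ∈ Set.Ioc (0 : ℝ) 1)
    (hρ : r ≤ ρ) : α * (1 - α) / ((1 + ρ) * ρ ^ α) ≤ 1 / (4 * (1 + r) * r) := by
  have hr0 : 0 < r := hr.1
  have hρ0 : 0 < ρ := hr0.trans_le hρ
  have hpow : r ≤ ρ ^ α :=
    calc r ≤ r ^ α := self_le_rpow_of_le_one hr0.le hr.2 hα.2
      _ ≤ ρ ^ α := rpow_le_rpow hr0.le hρ hα.1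
  calc α * (1 - α) / ((1 + ρ) * ρ ^ α) ≤ 1 / 4 / ((1 + r) * r) := by
        gcongr; exact mul_one_sub_le_one_quarter α
    _ = 1 / (4 * (1 + r) * r) := by rw [div_div, mul_assoc]

end Exponent

section Kernel

variable {σ ρ : ℝ}

theorem mul_add_div_mul_add_le {s : ℝ} (hσ : σ ∈ Set.Ioc (0 : ℝ) 1) (hρ : 0 < ρ) (hs : 0 ≤ s) :
    s * (ρ + s) / (σ * ρ + s) ≤ s / σ := by
  have hσ0 : 0 < σ := hσ.1
  rw [div_le_div_iff₀ (by positivity) hσ0, mul_assoc]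
  gcongr
  linarith [mul_le_of_le_one_left hs hσ.2]

theorem integral_mul_add_div_mul_add_le (hσ : σ ∈ Set.Ioc (0 : ℝ) 1) (hρ : 0 < ρ) :
    ∫ s in (0 : ℝ)..1, s * (ρ + s) / (σ * ρ + s) ≤ 1 / (2 * σ) := by
  have hcont : ContinuousOn (fun s : ℝ => s * (ρ + s) / (σ * ρ + s)) (Set.Icc 0 1) :=
    ContinuousOn.div (by fun_prop) (by fun_prop) fun s hs =>
      (add_pos_of_pos_of_nonneg (mul_pos hσ.1 hρ) hs.1).ne'
  calc ∫ s in (0 : ℝ)..1, s * (ρ + s) / (σ * ρ + s) ≤ ∫ s in (0 : ℝ)..1, s / σ :=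
        intervalIntegral.integral_mono_on zero_le_one
          (hcont.intervalIntegrable_of_Icc zero_le_one)
          (Continuous.intervalIntegrable (by fun_prop) 0 1)
          fun s hs => mul_add_div_mul_add_le hσ hρ hs.1
    _ = 1 / (2 * σ) := by
        rw [intervalIntegral.integral_div, integral_id, ← div_div]
        norm_num

end Kernel

/-- The lower end `(√2 - 1) / 2` of the range of `r` is where `1 - 1 / (4 (1 + r) r)` vanishes. -/
theorem weight_ineqs_general {α r ρ : ℝ} (hα : α ∈ Set.Icc (0 : ℝ) 1)
    (hr : r ∈ Set.Icc ((√2 - 1) / 2) 1) (hρ : r ≤ ρ) :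
    2 * (1 - α / 2) - (1 - α) / ρ ^ α ≥ 0 ∧
    2 * (1 - α / 2) - (1 - α)
        - α * (1 - α) / ((1 + ρ) * ρ ^ α) *
          ∫ s in (0 : ℝ)..1, s * (ρ + s) / ((1 - α / 2) * ρ + s)
      ≥ 1 - 1 / (4 * (1 + r) * r) ∧
    1 - 1 / (4 * (1 + r) * r) ≥ 0 := by
  have hr5 : 1 / 5 ≤ r := by linarith [hr.1, le_sqrt_of_sq_le (by norm_num : (7 / 5) ^ 2 ≤ (2 : ℝ))]
  have hr0 : 0 < r := by linarith
  have hρ0 : 0 < ρ := by linarith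
  have hσ : 1 / 2 ≤ 1 - α / 2 := by linarith [hα.2]
  have hintegral : ∫ s in (0 : ℝ)..1, s * (ρ + s) / ((1 - α / 2) * ρ + s) ≤ 1 :=
    (integral_mul_add_div_mul_add_le ⟨by linarith, by linarith [hα.1]⟩ hρ0).trans
      (div_le_one_of_le₀ (by linarith) (by linarith))
  have hcoeff : 0 ≤ α * (1 - α) / ((1 + ρ) * ρ ^ α) :=
    div_nonneg (mul_nonneg hα.1 (sub_nonneg.2 hα.2)) (by positivity)
  refine ⟨?_, ?_, ?_⟩
  · linarith [one_sub_div_rpow_le_two_sub hα (hr5.trans hρ)]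
  · linarith [mul_le_of_le_one_right hcoeff hintegral, mul_one_sub_div_rpow_le hα ⟨hr0, hr.2⟩ hρ]
  · exact sub_nonneg.2 <| div_le_one_of_le₀ ((half_sqrt_two_sub_one_le_iff hr0.le).1 hr.1)
      (by positivity)

/-- Elementary inequalities at `σ = 1 - α/2` for ratios `ρ ≥ ρ*`. -/
theorem weight_ineqs (α : ℝ) (hα : α ∈ Set.Ioo (0:ℝ) 1)
    (ρstar : ℝ) (hρpos : 0 < ρstar)
    (hρroot : ρstar * (1 + ρstar) = 1 - 3 * ρstar ^ 2 * (1 + ρstar))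
    (ρ : ℝ) (hρ : ρstar ≤ ρ) :
    2 * (1 - α / 2) - (1 - α) / ρ ^ α ≥ 0 ∧
    2 * (1 - α / 2) - (1 - α)
        - α * (1 - α) / ((1 + ρ) * ρ ^ α) *
          ∫ s in (0:ℝ)..1, s * (ρ + s) / ((1 - α / 2) * ρ + s)
      ≥ 1 - 1 / (4 * (1 + ρstar) * ρstar) ∧
    (1:ℝ) - 1 / (4 * (1 + ρstar) * ρstar) ≥ 0 :=
  weight_ineqs_general (Set.Ioo_subset_Icc_self hα) (mem_Icc_of_cubic_root hρpos hρroot) hρ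
end

section
/- Suppose the nonuniform time mesh satisfies: for every k ≥ 2, if ρ* < ρ_k < η then ρ* < ρ_{k+1} ≤ ρ_k²(1+ρ_k)/(1 − 3ρ_k²(1+ρ_k)), and if ρ_k ≥ η then ρ_{k+1} > ρ*. Then for all 1 ≤ j ≤ k, the entries of the L2-1_σ matrix satisfy [M]_{k,j} ≥ (ρ*/((1+ρ*)τ_j)) ∫_{t_{j−1}}^{min(t_j, t_k^*)} (t_k^* − s)^{−α} ds. -/
open MeasureTheory Real Finset

/-
Write `w(θ) = (t_k^* - (t_{j-1} + θ τ_j))^{-α}`, which increases on `[0, 1]` for `j < k`. In `c_j^k`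
it is paired with the odd weight `2θ - 1`, so `c_j^k ≥ 0`. In `-a_j^k` it is paired with a weight
whose values on `[0, 1]` are at least `τ_{j+1} / (τ_j + τ_{j+1}) = ρ_{j+1} / (1 + ρ_{j+1})`, which
bounds the entries below the diagonal because `ρ* < η` and the mesh condition force
`ρ_{j+1} > ρ*`. On the diagonal, `σ^{1-α} / ((1-α) τ_k^α)` is exactly
`τ_k⁻¹ ∫ (t_k^* - s)^{-α} ds` over `[t_{k-1}, t_k^*]`.
-/

lemma integral_two_mul_sub_mul_nonneg_of_monotoneOn {f : ℝ → ℝ} {a b : ℝ} (hab : a ≤ b)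
    (hf : MonotoneOn f (Set.Icc a b)) : 0 ≤ ∫ x in a..b, (2 * x - (a + b)) * f x := by
  have hmid : (a + b) / 2 ∈ Set.Icc a b := ⟨by linarith, by linarith⟩
  have hzero : ∫ x in a..b, (2 * x - (a + b)) * f ((a + b) / 2) = 0 := by
    rw [intervalIntegral.integral_mul_const,
      intervalIntegral.integral_sub (Continuous.intervalIntegrable (by fun_prop) _ _)
        intervalIntegrable_const,
      intervalIntegral.integral_const_mul, integral_id, intervalIntegral.integral_const,
      smul_eq_mul]
    ring
  have hint : IntervalIntegrable f volume a b :=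
    MonotoneOn.intervalIntegrable (Set.uIcc_of_le hab ▸ hf)
  rw [← hzero]
  refine intervalIntegral.integral_mono_on hab (Continuous.intervalIntegrable (by fun_prop) _ _)
    (hint.continuousOn_mul (by fun_prop)) fun x hx => ?_
  rcases le_total x ((a + b) / 2) with h | h
  · exact mul_le_mul_of_nonpos_left (hf hx hmid h) (by linarith)
  · exact mul_le_mul_of_nonneg_left (hf hmid hx h) (by linarith)

lemma integral_sub_rpow_neg {α : ℝ} (hα : α < 1) (a b : ℝ) :
    ∫ s in a..b, (b - s) ^ (-α) = (b - a) ^ (1 - α) / (1 - α) := by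
  rw [intervalIntegral.integral_comp_sub_left (fun x => x ^ (-α)), sub_self,
    integral_rpow (Or.inl (by linarith)), neg_add_eq_sub, zero_rpow (by linarith), sub_zero]

lemma integral_sub_rpow_nonneg {a b c : ℝ} (p : ℝ) (hab : a ≤ b) (hbc : b ≤ c) :
    0 ≤ ∫ s in a..b, (c - s) ^ p :=
  intervalIntegral.integral_nonneg hab fun _ hs =>
    rpow_nonneg (sub_nonneg.2 (hs.2.trans hbc)) p

lemma div_one_add_le_div_one_add {r s : ℝ} (hr : -1 < r) (hrs : r ≤ s) :
    r / (1 + r) ≤ s / (1 + s) := by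
  rw [div_le_div_iff₀ (by linarith) (by linarith)]
  linarith

lemma strictAntiOn_one_sub_three_mul_sq_mul_one_add :
    StrictAntiOn (fun x : ℝ => 1 - 3 * x ^ 2 * (1 + x)) (Set.Ici 0) := by
  intro x (hx : 0 ≤ x) y _ hxy
  dsimp only
  gcongr

lemma rhoStar_lt_eta {ρstar η : ℝ} (hρpos : 0 < ρstar)
    (hρroot : ρstar * (1 + ρstar) = 1 - 3 * ρstar ^ 2 * (1 + ρstar))
    (hηpos : 0 < η) (hηroot : 1 - 3 * η ^ 2 * (1 + η) = 0) : ρstar < η := by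
  refine (strictAntiOn_one_sub_three_mul_sq_mul_one_add.lt_iff_gt hηpos.le hρpos.le).1 ?_
  rw [hηroot, ← hρroot]
  positivity

section Mesh

variable {t : ℕ → ℝ} {j k : ℕ} {α : ℝ}

lemma tau_pos_s15 (hmono : StrictMono t) (hj : 1 ≤ j) : 0 < tau t j :=
  sub_pos.2 (hmono (by omega))

lemma tau_nonneg (hmono : Monotone t) (j : ℕ) : 0 ≤ tau t j :=
  sub_nonneg.2 (hmono (Nat.sub_le j 1))

lemma add_tau (t : ℕ → ℝ) (j : ℕ) : t (j - 1) + tau t j = t j := by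
  simp only [tau, add_sub_cancel]

lemma tstar_le_node (hα : 0 ≤ α) (hmono : Monotone t) (k : ℕ) : tstar α t k ≤ t k := by
  have h : 0 ≤ α * tau t k := mul_nonneg hα (tau_nonneg hmono k)
  rw [tstar]
  linarith [add_tau t k]

lemma node_lt_tstar (hα : α < 2) (hmono : StrictMono t) (hjk : j < k) : t j < tstar α t k :=
  calc t j ≤ t (k - 1) := hmono.monotone (by omega)
    _ < tstar α t k := lt_add_of_pos_right _ (mul_pos (by linarith) (tau_pos_s15 hmono (by omega)))

/-- The kernel `(t_k^* - s)^{-α}` pulled back to the reference interval by `s = t_{j-1} + θ τ_j`.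
It is written as a reciprocal to match the integrands of `acoef` and `ccoef`. -/
noncomputable def refKernel (α : ℝ) (t : ℕ → ℝ) (j k : ℕ) (θ : ℝ) : ℝ :=
  ((tstar α t k - (t (j - 1) + θ * tau t j)) ^ α)⁻¹

lemma tstar_sub_refNode_pos (hα : α < 2) (hmono : StrictMono t) (hjk : j < k) {θ : ℝ}
    (hθ : θ ≤ 1) : 0 < tstar α t k - (t (j - 1) + θ * tau t j) := by
  have hnode : t (j - 1) + θ * tau t j ≤ t j := by
    linarith [mul_le_of_le_one_left (tau_nonneg hmono.monotone j) hθ, add_tau t j]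
  exact sub_pos.2 (hnode.trans_lt (node_lt_tstar hα hmono hjk))

lemma refKernel_nonneg (hα : α < 2) (hmono : StrictMono t) (hjk : j < k) {θ : ℝ} (hθ : θ ≤ 1) :
    0 ≤ refKernel α t j k θ :=
  inv_nonneg.2 (rpow_nonneg (tstar_sub_refNode_pos hα hmono hjk hθ).le α)

lemma monotoneOn_refKernel (hα₀ : 0 ≤ α) (hα₂ : α < 2) (hmono : StrictMono t) (hjk : j < k) :
    MonotoneOn (refKernel α t j k) (Set.Iic 1) := by
  intro θ _ φ hφ hθφ
  have hpos := tstar_sub_refNode_pos hα₂ hmono hjk hφ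
  have hτ := tau_nonneg hmono.monotone j
  unfold refKernel
  gcongr

lemma integral_sub_rpow_neg_eq_tau_mul (hα : α < 2) (hmono : StrictMono t) (hjk : j < k) :
    ∫ s in (t (j - 1))..(t j), (tstar α t k - s) ^ (-α) =
      tau t j * ∫ θ in (0 : ℝ)..1, refKernel α t j k θ := by
  have hkernel : ∀ θ ∈ Set.uIcc (0 : ℝ) 1,
      refKernel α t j k θ = (tstar α t k - (t (j - 1) + tau t j * θ)) ^ (-α) := by
    intro θ hθ
    rw [Set.uIcc_of_le zero_le_one] at hθ
    rw [refKernel, mul_comm (tau t j), rpow_neg (tstar_sub_refNode_pos hα hmono hjk hθ.2).le]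
  rw [intervalIntegral.integral_congr hkernel,
    intervalIntegral.mul_integral_comp_add_mul (f := fun s => (tstar α t k - s) ^ (-α)),
    mul_zero, add_zero, mul_one, add_tau]

lemma ccoef_eq_integral_refKernel (α : ℝ) (t : ℕ → ℝ) (j k : ℕ) :
    ccoef α t j k = tau t j ^ 2 / (tau t (j + 1) * (tau t j + tau t (j + 1))) *
      ∫ θ in (0 : ℝ)..1, (2 * θ - 1) * refKernel α t j k θ := by
  rw [ccoef, ← intervalIntegral.integral_const_mul]
  congr with θ
  rw [refKernel, mul_div_mul_comm, div_eq_mul_inv (2 * θ - 1)]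

lemma neg_acoef_eq_integral_refKernel (α : ℝ) (t : ℕ → ℝ) (j k : ℕ) :
    -acoef α t j k = ∫ θ in (0 : ℝ)..1,
      (2 * tau t j * (1 - θ) + tau t (j + 1)) / (tau t j + tau t (j + 1)) *
        refKernel α t j k θ := by
  rw [acoef, ← intervalIntegral.integral_neg]
  congr with θ
  rw [refKernel, ← div_eq_mul_inv, div_div, ← neg_div]
  ring

-- `j = 0` is allowed: there `tau t 0 = t 0 - t (0 - 1) = 0`, so that `ccoef α t 0 k = 0`.
lemma ccoef_nonneg_s15 (hα₀ : 0 ≤ α) (hα₂ : α < 2) (hmono : StrictMono t) (hjk : j < k) :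
    0 ≤ ccoef α t j k := by
  have hτ := tau_nonneg hmono.monotone
  have hmoment : 0 ≤ ∫ θ in (0 : ℝ)..1, (2 * θ - 1) * refKernel α t j k θ := by
    simpa only [zero_add] using integral_two_mul_sub_mul_nonneg_of_monotoneOn zero_le_one
      ((monotoneOn_refKernel hα₀ hα₂ hmono hjk).mono Set.Icc_subset_Iic_self)
  rw [ccoef_eq_integral_refKernel]
  exact mul_nonneg
    (div_nonneg (sq_nonneg _) (mul_nonneg (hτ _) (add_nonneg (hτ _) (hτ _)))) hmoment

lemma rho_succ_div_one_add_rho_succ (h : tau t j ≠ 0) :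
    rho t (j + 1) / (1 + rho t (j + 1)) = tau t (j + 1) / (tau t j + tau t (j + 1)) := by
  rw [rho, Nat.add_sub_cancel, one_add_div h, div_div_div_cancel_right₀ h]

lemma rho_succ_mul_integral_le_neg_acoef (hα₀ : 0 ≤ α) (hα₂ : α < 2) (hmono : StrictMono t)
    (hj : 1 ≤ j) (hjk : j < k) :
    rho t (j + 1) / ((1 + rho t (j + 1)) * tau t j) *
        ∫ s in (t (j - 1))..(t j), (tstar α t k - s) ^ (-α) ≤ -acoef α t j k := by
  have hτ := tau_pos_s15 hmono hj
  have hτ' := tau_pos_s15 hmono (Nat.le_add_left 1 j)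
  have hint : IntervalIntegrable (refKernel α t j k) volume 0 1 :=
    ((monotoneOn_refKernel hα₀ hα₂ hmono hjk).mono
      (Set.uIcc_of_le (zero_le_one' ℝ) ▸ Set.Icc_subset_Iic_self)).intervalIntegrable
  calc rho t (j + 1) / ((1 + rho t (j + 1)) * tau t j) *
        ∫ s in (t (j - 1))..(t j), (tstar α t k - s) ^ (-α)
      = ∫ θ in (0 : ℝ)..1,
          tau t (j + 1) / (tau t j + tau t (j + 1)) * refKernel α t j k θ := by
        rw [integral_sub_rpow_neg_eq_tau_mul hα₂ hmono hjk, ← div_div, ← mul_assoc,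
          div_mul_cancel₀ _ hτ.ne', rho_succ_div_one_add_rho_succ hτ.ne',
          intervalIntegral.integral_const_mul]
    _ ≤ ∫ θ in (0 : ℝ)..1, (2 * tau t j * (1 - θ) + tau t (j + 1)) /
          (tau t j + tau t (j + 1)) * refKernel α t j k θ := by
        refine intervalIntegral.integral_mono_on zero_le_one (hint.const_mul _)
          (hint.continuousOn_mul (by fun_prop)) fun θ hθ => ?_
        have hweight : 0 ≤ 2 * tau t j * (1 - θ) := mul_nonneg (by positivity) (by linarith [hθ.2])
        have hkernel := refKernel_nonneg hα₂ hmono hjk hθ.2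
        gcongr
        linarith
    _ = -acoef α t j k := (neg_acoef_eq_integral_refKernel α t j k).symm

lemma neg_acoef_le_Mentry (hα₀ : 0 ≤ α) (hα₂ : α < 2) (hmono : StrictMono t)
    (hj : 1 ≤ j) (hjk : j < k) : -acoef α t j k ≤ Mentry α t k j := by
  rw [Mentry, if_neg (by omega), if_neg hjk.ne]
  split_ifs with h
  · rw [h]
  · rw [dcoef]
    linarith [ccoef_nonneg_s15 hα₀ hα₂ hmono (show j - 1 < k by omega)]

lemma inv_tau_mul_integral_le_Mentry_self (hα₀ : 0 ≤ α) (hα₁ : α < 1) (hmono : StrictMono t)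
    (hk : 1 ≤ k) :
    (tau t k)⁻¹ * ∫ s in (t (k - 1))..(tstar α t k), (tstar α t k - s) ^ (-α) ≤
      Mentry α t k k := by
  have hτ := tau_pos_s15 hmono hk
  have hlocal : (tau t k)⁻¹ * ∫ s in (t (k - 1))..(tstar α t k), (tstar α t k - s) ^ (-α) =
      (1 - α / 2) ^ (1 - α) / ((1 - α) * tau t k ^ α) := by
    rw [integral_sub_rpow_neg hα₁, tstar, add_sub_cancel_left, mul_rpow (by linarith) hτ.le,
      rpow_sub hτ, rpow_one]
    field_simp
  rw [Mentry, if_neg (by omega), if_pos rfl, hlocal]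
  exact le_add_of_nonneg_left (ccoef_nonneg_s15 hα₀ (by linarith) hmono (by omega))

end Mesh

theorem Mentry_lower_bound_general {α : ℝ} (hα₀ : 0 ≤ α) (hα₁ : α < 1)
    {t : ℕ → ℝ} (hmono : StrictMono t) {r : ℝ} (hr : 0 ≤ r) {k j : ℕ} (hj : 1 ≤ j) (hjk : j ≤ k)
    (hρ : j < k → r ≤ rho t (j + 1)) :
    r / ((1 + r) * tau t j) *
        ∫ s in (t (j - 1))..(min (t j) (tstar α t k)), (tstar α t k - s) ^ (-α) ≤
      Mentry α t k j := by
  have hα₂ : α < 2 := by linarith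
  have hτ := tau_pos_s15 hmono hj
  have hnode : t (j - 1) < tstar α t k := node_lt_tstar hα₂ hmono (by omega)
  have hI := integral_sub_rpow_nonneg (-α)
    (le_min (hmono.monotone (Nat.sub_le j 1)) hnode.le) (min_le_right (t j) (tstar α t k))
  rcases hjk.lt_or_eq with hlt | rfl
  · have hratio : r / ((1 + r) * tau t j) ≤ rho t (j + 1) / ((1 + rho t (j + 1)) * tau t j) := by
      rw [← div_div, ← div_div]
      gcongr ?_ / _
      exact div_one_add_le_div_one_add (by linarith) (hρ hlt)
    refine (mul_le_mul_of_nonneg_right hratio hI).trans ?_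
    rw [min_eq_left (node_lt_tstar hα₂ hmono hlt).le]
    exact (rho_succ_mul_integral_le_neg_acoef hα₀ hα₂ hmono hj hlt).trans
      (neg_acoef_le_Mentry hα₀ hα₂ hmono hj hlt)
  · have hratio : r / ((1 + r) * tau t j) ≤ (tau t j)⁻¹ := by
      rw [← div_div, ← one_div]
      gcongr
      exact div_le_one_of_le₀ (by linarith) (by linarith)
    refine (mul_le_mul_of_nonneg_right hratio hI).trans ?_
    rw [min_eq_right (tstar_le_node hα₀ hmono.monotone j)]
    exact inv_tau_mul_integral_le_Mentry_self hα₀ hα₁ hmono hj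

/-- (Q1): lower bound on the entries of the L2-1_σ matrix. -/
theorem Mentry_lower_bound (α : ℝ) (hα : α ∈ Set.Ioo (0:ℝ) 1)
    (t : ℕ → ℝ) (ht0 : t 0 = 0) (hmono : StrictMono t)
    (ρstar η : ℝ) (hρpos : 0 < ρstar)
    (hρroot : ρstar * (1 + ρstar) = 1 - 3 * ρstar ^ 2 * (1 + ρstar))
    (hηpos : 0 < η) (hηroot : 1 - 3 * η ^ 2 * (1 + η) = 0)
    (hmesh : ∀ k : ℕ, 2 ≤ k →
      (ρstar < rho t k ∧ rho t k < η ∧ ρstar < rho t (k + 1) ∧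
        rho t (k + 1) ≤ rho t k ^ 2 * (1 + rho t k) /
          (1 - 3 * rho t k ^ 2 * (1 + rho t k))) ∨
      (η ≤ rho t k ∧ ρstar < rho t (k + 1)))
    (k j : ℕ) (hj1 : 1 ≤ j) (hjk : j ≤ k) :
    Mentry α t k j
      ≥ ρstar / ((1 + ρstar) * tau t j) *
          ∫ s in (t (j - 1))..(min (t j) (tstar α t k)), (tstar α t k - s) ^ (-α) :=
  Mentry_lower_bound_general hα.1.le hα.2 hmono hρpos.le hj1 hjk fun _ =>
    (hmesh (j + 1) (by omega)).elim (fun h => h.1.le) fun h =>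
      (rhoStar_lt_eta hρpos hρroot hηpos hηroot).le.trans h.1
end
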